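/- Let G be a 2-connected subgraph of Q_n with distinct vertices a, b such that every vertex z ∉ {a, b} has degree at least d ≥ 2 in G. Then G contains an a–b path of length at least 2^(d-1). -/

import Mathlib

def hypercube (n : ℕ) : SimpleGraph (Fin n → Bool) :=
  SimpleGraph.fromRel (fun x y => hammingDist x y = 1)

def TwoConnected {V : Type*} (H : SimpleGraph V) : Prop :=
  (∃ x y z : V, x ≠ y ∧ x ≠ z ∧ y ≠ z) ∧
  ∀ v : V, ((⊤ : H.Subgraph).deleteVerts {v}).coe.Connected

/-!
Two distinct vertices of `Q_n` differ in some coordinate, and the edges in that direction form a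
matching separating them. The theorem holds for every finite graph in which all pairs of distinct
vertices are separated by a matching (such a graph is triangle-free). Write `d = m + 2`. One proves,
by induction on `m` and then on the number of vertices, the stronger assertion in which one further
vertex `z` is exempt from the degree condition and 2-connectedness is only required after adding the
edge `ab`.

If two vertices cut off a part containing neither `a` nor `b`, the assertion for that part yields a
long path between the two, which is extended to `a` and `b` by Menger's theorem. Otherwise separate
`a` from `b` by a matching and split the vertices into two connected sides `C ∋ a` and `D ∋ b`.
Inside a side each vertex loses at most one neighbour, so the assertion for `m - 1` applies to the
end blocks of the sides. There is no small cut, so a path from `a` to `b` can be routed through an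
end block of `C` and an end block of `D`, and it gains `2 ^ m` in each of them.

The end block might consist of a cutvertex and `z` alone. Then `z` has degree two and is suppressed:
its two edges are replaced by a single one, and the same routing works. If nothing but `a` and `z`
is left on that side, the path starts with `a`, `z` and continues in `D` by induction on the number
of vertices.
-/

section PathsInVertexSets

variable {V : Type*} {G H : SimpleGraph V} {S T U X : Set V} {a b m x y r : V} {k l : ℕ}

/-- The graph induced on `S` contains a path from `a` to `b` of length at least `k`. With `k = 0`
this says that `a` and `b` are joined inside `S`. -/
def HasLongPath (G : SimpleGraph V) (S : Set V) (a b : V) (k : ℕ) : Prop :=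
  ∃ p : G.Walk a b, p.IsPath ∧ (∀ v ∈ p.support, v ∈ S) ∧ k ≤ p.length

namespace HasLongPath

theorem left_mem (h : HasLongPath G S a b k) : a ∈ S :=
  let ⟨p, _, hS, _⟩ := h
  hS a p.start_mem_support

theorem right_mem (h : HasLongPath G S a b k) : b ∈ S :=
  let ⟨p, _, hS, _⟩ := h
  hS b p.end_mem_support

theorem refl (h : a ∈ S) : HasLongPath G S a a 0 :=
  ⟨.nil, .nil, by simpa using h, le_rfl⟩

theorem mono (h : HasLongPath G S a b k) (hST : S ⊆ T) (hlk : l ≤ k) : HasLongPath G T a b l :=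
  let ⟨p, hp, hS, hk⟩ := h
  ⟨p, hp, fun v hv => hST (hS v hv), hlk.trans hk⟩

theorem symm (h : HasLongPath G S a b k) : HasLongPath G S b a k :=
  let ⟨p, hp, hS, hk⟩ := h
  ⟨p.reverse, hp.reverse, by simpa using hS, by simpa using hk⟩

theorem of_walk (p : G.Walk a b) (hS : ∀ v ∈ p.support, v ∈ S) : HasLongPath G S a b 0 := by
  classical
  exact ⟨p.bypass, p.bypass_isPath, fun v hv => hS v (p.support_bypass_subset_support hv),
    Nat.zero_le _⟩

theorem trans (h : HasLongPath G S a m 0) (h' : HasLongPath G S m b 0) :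
    HasLongPath G S a b 0 := by
  obtain ⟨p, -, hp, -⟩ := h
  obtain ⟨q, -, hq, -⟩ := h'
  exact of_walk (p.append q) fun v hv =>
    ((p.mem_support_append_iff q).1 hv).elim (hp v) (hq v)

theorem of_adj (hx : x ∈ S) (hy : y ∈ S) (hxy : G.Adj x y) : HasLongPath G S x y 0 :=
  of_walk hxy.toWalk (by simp [hx, hy])

theorem cons (hxy : G.Adj x y) (h : HasLongPath G S y b k) (hx : x ∉ S) :
    HasLongPath G (insert x S) x b (k + 1) := by
  obtain ⟨p, hp, hS, hk⟩ := h
  refine ⟨.cons hxy p, hp.cons fun hxp => hx (hS x hxp), ?_, by simpa using hk⟩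
  simpa using fun v hv => Or.inr (hS v hv)

theorem append (h : HasLongPath G S a m k) (h' : HasLongPath G T m b l)
    (hST : ∀ v ∈ S, v ∈ T → v = m) : HasLongPath G (S ∪ T) a b (k + l) := by
  obtain ⟨p, hp, hS, hk⟩ := h
  obtain ⟨q, hq, hT, hl⟩ := h'
  have hm : m ∉ q.support.tail := by
    have := hq.support_nodup
    rw [← q.cons_tail_support] at this
    exact (List.nodup_cons.1 this).1
  refine ⟨p.append q, ?_, ?_, by rw [SimpleGraph.Walk.length_append]; lia⟩
  · rw [SimpleGraph.Walk.isPath_def, SimpleGraph.Walk.support_append]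
    refine hp.support_nodup.append hq.support_nodup.tail fun v hvp hvq => hm ?_
    exact hST v (hS v hvp) (hT v (List.mem_of_mem_tail hvq)) ▸ hvq
  · exact fun v hv => ((p.mem_support_append_iff q).1 hv).imp (hS v) (hT v)

theorem bridge (h : HasLongPath G S a x k) (hxy : G.Adj x y) (h' : HasLongPath G T y b l)
    (hST : Disjoint S T) : HasLongPath G (S ∪ T) a b (k + 1 + l) := by
  rw [Set.disjoint_left] at hST
  have hx := h.right_mem
  exact (h.append (h'.cons hxy (hST hx)) (by grind)).mono (by grind) (by lia)

theorem transfer (h : HasLongPath G S a b k)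
    (hGH : ∀ x ∈ S, ∀ y ∈ S, G.Adj x y → H.Adj x y) : HasLongPath H S a b k := by
  obtain ⟨p, hp, hS, hk⟩ := h
  have hpH : ∀ e ∈ p.edges, e ∈ H.edgeSet := by
    rintro ⟨x, y⟩ he
    exact hGH x (hS x (p.fst_mem_support_of_mem_edges he)) y
      (hS y (p.snd_mem_support_of_mem_edges he)) (p.adj_of_mem_edges he)
  exact ⟨p.transfer H hpH, hp.transfer hpH, by simpa using hS, by simpa using hk⟩

end HasLongPath

/-- The component of `r` in the graph induced on `X`; empty if `r ∉ X`. -/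
def component (G : SimpleGraph V) (X : Set V) (r : V) : Set V :=
  {v | HasLongPath G X r v 0}

theorem component_subset : component G X r ⊆ X :=
  fun _ h => HasLongPath.right_mem h

theorem self_mem_component (h : r ∈ X) : r ∈ component G X r :=
  HasLongPath.refl h

theorem mem_component_of_adj (hx : x ∈ component G X r) (hy : y ∈ X) (hxy : G.Adj x y) :
    y ∈ component G X r :=
  HasLongPath.trans hx (.of_adj (component_subset hx) hy hxy)

theorem hasLongPath_component_root (hx : x ∈ component G X r) :
    HasLongPath G (component G X r) r x 0 := by
  classical
  obtain ⟨p, -, hX, -⟩ := hx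
  exact .of_walk p fun v hv =>
    .of_walk (p.takeUntil v hv) fun w hw => hX w (p.support_takeUntil_subset_support hv hw)

theorem hasLongPath_component (hx : x ∈ component G X r) (hy : y ∈ component G X r) :
    HasLongPath G (component G X r) x y 0 :=
  (hasLongPath_component_root hx).symm.trans (hasLongPath_component_root hy)

/-- Every edge of the graph induced on `X` that leaves `U` ends in `A`. For `A = ∅` the set `U` is
closed under adjacency in `X`; for `A = {t}` or `A = {s, t}` it is cut off by these vertices. -/
def AttachedAt (G : SimpleGraph V) (X U A : Set V) : Prop :=
  ∀ x ∈ U, ∀ y ∈ X, G.Adj x y → y ∈ U ∨ y ∈ A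

theorem AttachedAt.mem_of_hasLongPath (hU : AttachedAt G X U ∅) (ha : a ∈ U)
    (h : HasLongPath G X a b k) : b ∈ U := by
  obtain ⟨p, -, hX, -⟩ := h
  induction p with
  | nil => exact ha
  | cons hadj p ih =>
    have hpX : ∀ v ∈ p.support, v ∈ X := fun v hv => hX v (by simp [hv])
    exact ih ((hU _ ha _ (hpX _ p.start_mem_support) hadj).resolve_right id) hpX

theorem HasLongPath.exists_adj_notMem (h : HasLongPath G X a b k) (ha : a ∈ U) (hb : b ∉ U) :
    ∃ x ∈ U, ∃ y ∈ X, y ∉ U ∧ G.Adj x y := by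
  by_contra! hU
  exact hb (AttachedAt.mem_of_hasLongPath (by grind [AttachedAt]) ha h)

/-- Every vertex of `C` is joined to `a` inside `C`, expressed through cuts: each nonempty part of
`C` that misses `a` sends an edge to the rest of `C`. -/
def ConnectedFrom (G : SimpleGraph V) (C : Set V) (a : V) : Prop :=
  ∀ U ⊆ C, U.Nonempty → a ∉ U → ∃ x ∈ U, ∃ y ∈ C, y ∉ U ∧ G.Adj x y

theorem connectedFrom_component : ConnectedFrom G (component G X r) r := by
  rintro U hU ⟨u, hu⟩ hr
  exact (hasLongPath_component_root (hU hu)).symm.exists_adj_notMem hu hr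

/-- The graph induced on `S` becomes 2-connected when the edge `ab` is added: no nonempty part of
`S` avoiding `a` and `b` is cut off by a single vertex. -/
def TwoConnectedBetween (G : SimpleGraph V) (S : Set V) (a b : V) : Prop :=
  ∀ U ⊆ S, U.Nonempty → a ∉ U → b ∉ U → ∀ t, ¬ AttachedAt G S U {t}

end PathsInVertexSets

section DisjointPaths

variable {V : Type*} {G : SimpleGraph V} {X A B U U' : Set V} {u v p q t t' : V}

/-- `U` is a side of a separation of `A` from `B` in the graph induced on `X` whose separator is the
single vertex `t`. -/
structure IsBarrier (G : SimpleGraph V) (X A B U : Set V) (t : V) : Prop where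
  subset : U ⊆ X
  source_subset : A ⊆ insert t U
  disjoint_target : Disjoint B U
  attachedAt : AttachedAt G X U {t}

/-- Two disjoint paths inside `X` join `u` and `v` to `p` and `q`, in one of the two orders. -/
def DisjointlyLinked (G : SimpleGraph V) (X : Set V) (u v p q : V) : Prop :=
  ∃ P Q : Set V, P ⊆ X ∧ Q ⊆ X ∧ Disjoint P Q ∧
    (HasLongPath G P u p 0 ∧ HasLongPath G Q v q 0 ∨ HasLongPath G P u q 0 ∧ HasLongPath G Q v p 0)

theorem DisjointlyLinked.swap_targets (h : DisjointlyLinked G X u v p q) :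
    DisjointlyLinked G X u v q p :=
  let ⟨P, Q, hP, hQ, hPQ, h⟩ := h
  ⟨P, Q, hP, hQ, hPQ, h.symm⟩

theorem IsBarrier.union_of_mem (h : IsBarrier G X A B U t) (h' : IsBarrier G X A B U' t')
    (ht' : t' ∈ insert t U) : IsBarrier G X A B ((U ∪ U') \ {t}) t where
  subset := by grind [h.subset, h'.subset]
  source_subset := by grind [h.source_subset]
  disjoint_target := by
    have := h.disjoint_target
    have := h'.disjoint_target
    grind
  attachedAt := by
    have := h.attachedAt
    have := h'.attachedAt
    grind [AttachedAt]

theorem IsBarrier.inter_or_union (h : IsBarrier G X A B U t) (h' : IsBarrier G X A B U' t') :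
    (A ⊆ U ∩ U' ∧ AttachedAt G X (U ∩ U') ∅) ∨
      ∃ W s, IsBarrier G X A B W s ∧ insert t U ∪ insert t' U' ⊆ insert s W := by
  by_cases ht' : t' ∈ insert t U
  · exact .inr ⟨_, t, h.union_of_mem h' ht', by grind⟩
  by_cases ht : t ∈ insert t' U'
  · exact .inr ⟨_, t', h'.union_of_mem h ht, by grind⟩
  refine .inl ⟨?_, ?_⟩
  · grind [h.source_subset, h'.source_subset]
  · have := h.attachedAt
    have := h'.attachedAt
    grind [AttachedAt]

theorem exists_isBarrier_forall_subset [Finite V]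
    (hX : ∀ U t, ¬ IsBarrier G X {u, v} B U t) :
    ∃ U t, IsBarrier G (X \ {u}) {v} B U t ∧
      ∀ U' t', IsBarrier G (X \ {u}) {v} B U' t' → insert t' U' ⊆ insert t U := by
  obtain ⟨⟨U, t⟩, hU, hmax⟩ := Set.exists_max_image
    {c : Set V × V | IsBarrier G (X \ {u}) {v} B c.1 c.2} (fun c => (insert c.2 c.1).ncard)
    (Set.toFinite _) ⟨(∅, v), by simp, by simp, by simp, by simp [AttachedAt]⟩
  refine ⟨U, t, hU, fun U' t' hU' => ?_⟩
  obtain ⟨hvUU', hclosed⟩ | ⟨W, s, hW, hsub⟩ := hU.inter_or_union hU'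
  · refine absurd ⟨?_, ?_, ?_, ?_⟩ (hX (U ∩ U') u)
    · grind [hU.subset]
    · grind
    · exact hU.disjoint_target.mono_right Set.inter_subset_left
    · grind [AttachedAt]
  · have := Set.eq_of_subset_of_ncard_le (Set.subset_union_left.trans hsub) (hmax (W, s) hW)
    grind

theorem disjointlyLinked_self (hp : p ∈ X) (hv : v ∈ X)
    (hX : ∀ U t, ¬ IsBarrier G X {p, v} {p, q} U t) : DisjointlyLinked G X p v p q := by
  have hpv : v ≠ p := by
    rintro rfl
    exact hX ∅ v ⟨by simp, by simp, by simp, by simp [AttachedAt]⟩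
  have hq : q ∈ component G (X \ {p}) v := by
    by_contra hq
    have hsub : component G (X \ {p}) v ⊆ X \ {p} := component_subset
    refine hX (component G (X \ {p}) v) p ⟨by grind, ?_, ?_, ?_⟩
    · grind [self_mem_component (G := G) (show v ∈ X \ {p} by grind)]
    · grind
    · intro x hx y hy hxy
      by_cases hyp : y = p
      · exact .inr hyp
      · exact .inl (mem_component_of_adj hx ⟨hy, hyp⟩ hxy)
  exact ⟨{p}, X \ {p}, by simpa using hp, Set.sdiff_subset, by simp, .inl ⟨.refl rfl, hq⟩⟩

theorem DisjointlyLinked.cons (hu : u ∈ X) {w : V} (huw : G.Adj u w)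
    (h : DisjointlyLinked G (X \ {u}) w v p q) : DisjointlyLinked G X u v p q := by
  obtain ⟨P, Q, hP, hQ, hPQ, h⟩ := h
  have huP : u ∉ P := fun h => (hP h).2 rfl
  refine ⟨insert u P, Q, by grind, by grind, by grind, ?_⟩
  exact h.imp (.imp_left fun h => (h.cons huw huP).mono subset_rfl (Nat.zero_le _))
    (.imp_left fun h => (h.cons huw huP).mono subset_rfl (Nat.zero_le _))

/-- Menger's theorem for two paths, by induction on `X`: deleting `u` and continuing from a
neighbour outside every one-vertex separation of `v` creates no new separation. -/
theorem disjointlyLinked_of_forall_not_isBarrier [Finite V] (hu : u ∈ X) (hv : v ∈ X)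
    (hX : ∀ U t, ¬ IsBarrier G X {u, v} {p, q} U t) : DisjointlyLinked G X u v p q := by
  induction hn : X.ncard generalizing X u with
  | zero => exact absurd hu (by simp [(Set.ncard_eq_zero).1 hn])
  | succ n ih =>
    by_cases hup : u = p
    · subst hup
      exact disjointlyLinked_self hu hv hX
    by_cases huq : u = q
    · subst huq
      rw [Set.pair_comm p] at hX
      exact (disjointlyLinked_self hu hv hX).swap_targets
    have hvu : v ≠ u := by
      rintro rfl
      exact hX ∅ v ⟨by simp, by simp, by simp, by simp [AttachedAt]⟩
    obtain ⟨U, t, hU, hmax⟩ := exists_isBarrier_forall_subset hX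
    obtain ⟨w, hw, hwU, huw⟩ : ∃ w ∈ X \ {u}, w ∉ insert t U ∧ G.Adj u w := by
      by_contra! hnbr
      refine hX (insert u U) t ⟨?_, ?_, ?_, ?_⟩
      · grind [hU.subset]
      · grind [hU.source_subset]
      · grind [hU.disjoint_target]
      · have := hU.attachedAt
        grind [AttachedAt]
    refine .cons hu huw (ih hw ⟨hv, hvu⟩ (fun U' t' hU' => hwU ?_) ?_)
    · exact hmax U' t' ⟨hU'.subset, by grind [hU'.source_subset], hU'.disjoint_target,
        hU'.attachedAt⟩ (hU'.source_subset (by simp))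
    · have := Set.ncard_sdiff_singleton_add_one hu
      lia

end DisjointPaths

section EndPieces

variable {V : Type*} {G H : SimpleGraph V} {C D K W Y : Set V} {a b c v w x y s : V}

theorem ConnectedFrom.exists_adj_component (hC : ConnectedFrom G C a) (ha : a ∈ Y)
    (hCY : (C \ Y).Nonempty) : ∃ x ∈ C \ Y, ∃ y ∈ component G Y a, G.Adj x y := by
  obtain ⟨z, hzC, hzY⟩ := hCY
  obtain ⟨x, ⟨hxC, hx⟩, y, hyC, hy, hxy⟩ := hC (C \ component G Y a) Set.sdiff_subset
    ⟨z, hzC, fun h => hzY (component_subset h)⟩ (fun h => h.2 (self_mem_component ha))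
  have hya : y ∈ component G Y a := by grind
  exact ⟨x, ⟨hxC, fun hxY => hx (mem_component_of_adj hya hxY hxy.symm)⟩, y, hya, hxy⟩

/-- A minimal part `K` of `C`, away from the root `a`, that is cut off by a single vertex `c`: an
end block of the graph induced on `C`, without its cutvertex. -/
structure IsEndPiece (G : SimpleGraph V) (C : Set V) (a : V) (K : Set V) (c : V) : Prop where
  subset : K ⊆ C
  nonempty : K.Nonempty
  root_notMem : a ∉ K
  apex_mem : c ∈ C
  apex_notMem : c ∉ K
  attachedAt : AttachedAt G C K {c}
  minimal : ∀ U ⊆ K, U.Nonempty → U ≠ K → ∀ t, ¬ AttachedAt G C U {t}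

namespace IsEndPiece

theorem insert_subset (h : IsEndPiece G C a K c) : insert c K ⊆ C :=
  Set.insert_subset h.apex_mem h.subset

theorem exists_adj_apex (h : IsEndPiece G C a K c) (hC : ConnectedFrom G C a) :
    ∃ x ∈ K, G.Adj c x := by
  obtain ⟨x, hx, y, hy, hyK, hxy⟩ := hC K h.subset h.nonempty h.root_notMem
  obtain rfl : y = c := (h.attachedAt x hx y hy hxy).resolve_left hyK
  exact ⟨x, hx, hxy.symm⟩

theorem hasLongPath_apex (h : IsEndPiece G C a K c) (hC : ConnectedFrom G C a) (ha : a ∈ C) :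
    HasLongPath G (C \ K) a c 0 := by
  obtain ⟨x, hx, y, hy, hxy⟩ := hC.exists_adj_component (Y := C \ K) ⟨ha, h.root_notMem⟩
    (h.nonempty.mono fun x hx => ⟨h.subset hx, fun h' => h'.2 hx⟩)
  have hyK : y ∈ C \ K := component_subset hy
  have hyc : y = c := (h.attachedAt x (by grind) y hyK.1 hxy).resolve_left hyK.2
  exact hyc ▸ hy

theorem not_attachedAt_of_subset (h : IsEndPiece G C a K c) {U : Set V} {t : V} (hU : U ⊆ K)
    (hne : U.Nonempty) (hUK : U ≠ K) : ¬ AttachedAt G (insert c K) U {t} := by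
  intro hat
  refine h.minimal U hU hne hUK t fun u hu y hy huy => hat u hu y ?_ huy
  exact (h.attachedAt u (hU hu) y hy huy).symm

theorem twoConnectedBetween_apex (h : IsEndPiece G C a K c) (hx : x ∈ K) :
    TwoConnectedBetween G (insert c K) c x :=
  fun _ hU hne hc hxU _ => h.not_attachedAt_of_subset (by grind) hne (by grind)

/-- If the apex lies in the cut-off part `U`, then the complement of `U` in `K` is cut off
instead. -/
theorem twoConnectedBetween (h : IsEndPiece G C a K c) (hC : ConnectedFrom G C a) (hx : x ∈ K)
    (hy : y ∈ K) (hxy : x ≠ y) : TwoConnectedBetween G (insert c K) x y := by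
  intro U hU hne hxU hyU t hat
  by_cases hc : c ∈ U
  · obtain ⟨z, hzK, hcz⟩ := h.exists_adj_apex hC
    refine h.not_attachedAt_of_subset (U := (K \ U) \ {t}) (t := t) (by grind) ?_ ?_ ?_
    · by_cases hxt : x = t
      · exact ⟨y, ⟨hy, hyU⟩, by grind⟩
      · exact ⟨x, ⟨hx, hxU⟩, hxt⟩
    · have := hat c hc z (.inr hzK) hcz
      grind
    · intro u hu v hv huv
      have := fun hvU => hat v hvU u (.inr hu.1.1) huv.symm
      grind
  · exact h.not_attachedAt_of_subset (by grind) hne (by grind) hat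

theorem congr (hGH : ∀ x ∈ C, ∀ y ∈ C, G.Adj x y ↔ H.Adj x y) (h : IsEndPiece G C a K c) :
    IsEndPiece H C a K c := by
  have hat : ∀ U ⊆ K, ∀ t, AttachedAt H C U {t} ↔ AttachedAt G C U {t} := fun U hU t =>
    forall₂_congr fun x hx => forall₂_congr fun y hy => by
      rw [hGH x (h.subset (hU hx)) y hy]
  refine { h with attachedAt := (hat K subset_rfl c).2 h.attachedAt, minimal := ?_ }
  exact fun U hU hne hUK t => (hat U hU t).not.2 (h.minimal U hU hne hUK t)

end IsEndPiece

theorem ConnectedFrom.exists_isEndPiece_subset [Finite V] (hC : ConnectedFrom G C a) (hW : W ⊆ C)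
    (hne : W.Nonempty) (haW : a ∉ W) (hat : AttachedAt G C W {s}) :
    ∃ K c, K ⊆ W ∧ IsEndPiece G C a K c := by
  obtain ⟨K, ⟨hKW, hKne, c, hKc⟩, hmin⟩ := Set.exists_min_image
    {K | K ⊆ W ∧ K.Nonempty ∧ ∃ s, AttachedAt G C K {s}} Set.ncard (Set.toFinite _)
    ⟨W, subset_rfl, hne, s, hat⟩
  obtain ⟨x, hx, y, hy, hyK, hxy⟩ := hC K (hKW.trans hW) hKne (fun h => haW (hKW h))
  obtain rfl : y = c := (hKc x hx y hy hxy).resolve_left hyK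
  refine ⟨K, y, hKW, hKW.trans hW, hKne, fun h => haW (hKW h), hy, hyK, hKc, ?_⟩
  exact fun U hU hUne hUK t ht =>
    hUK (Set.eq_of_subset_of_ncard_le hU (hmin U ⟨hU.trans hKW, hUne, t, ht⟩))

/-- The vertices of `D` that `w` cuts off from the root `b`; all of `D \ {b}` if `w = b`. -/
def behind (G : SimpleGraph V) (D : Set V) (b w : V) : Set V :=
  (D \ {w}) \ component G (D \ {w}) b

theorem ConnectedFrom.hasLongPath_of_notMem_behind (hD : ConnectedFrom G D b) (hb : b ∈ D)
    (hv : v ∈ D) (hvw : v ∉ behind G D b w) : HasLongPath G (D \ behind G D b w) b v 0 := by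
  have hsub : component G (D \ {w}) b ⊆ D \ behind G D b w := fun x hx =>
    ⟨(component_subset hx).1, fun h => h.2 hx⟩
  by_cases hvw' : v = w
  · subst hvw'
    by_cases hvb : v = b
    · subst hvb
      exact .refl ⟨hb, hvw⟩
    · obtain ⟨x, hx, y, hy, hxy⟩ := hD.exists_adj_component (Y := D \ {v})
        ⟨hb, Ne.symm hvb⟩ ⟨v, hv, by simp⟩
      obtain rfl : x = v := by grind
      exact ((hasLongPath_component_root hy).mono hsub le_rfl).trans
        (.of_adj (hsub hy) ⟨hv, hvw⟩ hxy.symm)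
  · exact (hasLongPath_component_root (by grind [behind])).mono hsub le_rfl

theorem ConnectedFrom.behind_ssubset (hD : ConnectedFrom G D b) (hb : b ∈ D)
    (hy : y ∈ behind G D b w) : behind G D b y ⊂ behind G D b w := by
  refine (Set.ssubset_iff_of_subset fun v hv => ?_).2 ⟨y, hy, fun h => h.1.2 rfl⟩
  by_contra hvw
  exact hv.2 ((hD.hasLongPath_of_notMem_behind hb hv.1.1 hvw).mono (by grind) le_rfl)

theorem component_subset_behind (hv : v ∈ behind G D b w) :
    component G (D \ {w}) v ⊆ behind G D b w :=
  fun _ hx => ⟨component_subset hx, fun hbx => hv.2 (HasLongPath.trans hbx (HasLongPath.symm hx))⟩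

/-- Among the cutvertices take one that cuts off as little as possible. -/
theorem ConnectedFrom.exists_isEndPiece_component [Finite V] (hD : ConnectedFrom G D b)
    (hb : b ∈ D) (hne : (D \ {b}).Nonempty) :
    ∃ w, (behind G D b w).Nonempty ∧
      ∀ v ∈ behind G D b w, IsEndPiece G D b (component G (D \ {w}) v) w := by
  have hbb : (behind G D b b).Nonempty :=
    hne.mono fun v hv => ⟨hv, fun h => (HasLongPath.left_mem h).2 rfl⟩
  obtain ⟨w, ⟨hwD, hwne⟩, hmin⟩ := Set.exists_min_image {w | w ∈ D ∧ (behind G D b w).Nonempty}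
    (fun w => (behind G D b w).ncard) (Set.toFinite _) ⟨b, hb, hbb⟩
  refine ⟨w, hwne, fun v hv => ?_⟩
  have hLD : component G (D \ {w}) v ⊆ D \ {w} := component_subset
  have hLw := component_subset_behind hv
  refine ⟨by grind, ⟨v, self_mem_component hv.1⟩, fun h => hv.2 (HasLongPath.symm h), hwD,
    by grind, ?_, ?_⟩
  · intro x hx y hy hxy
    by_cases hyw : y = w
    · exact .inr hyw
    · exact .inl (mem_component_of_adj hx ⟨hy, hyw⟩ hxy)
  · rintro U hU ⟨u, hu⟩ hUL t hat
    obtain ⟨z, hz, hzU⟩ := Set.exists_of_ssubset (hU.ssubset_of_ne hUL)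
    obtain ⟨x, hx, y, hy, hyU, hxy⟩ := (hasLongPath_component (hU hu) hz).exists_adj_notMem hu hzU
    obtain rfl : y = t := (hat x hx y (hLD hy).1 hxy).resolve_left hyU
    have hclosed : AttachedAt G (D \ {y}) U ∅ := by grind [AttachedAt]
    have hbU : b ∉ U := fun h => hv.2 (HasLongPath.symm (hU h))
    have huy : u ∈ behind G D b y := ⟨⟨(hLD (hU hu)).1, by grind⟩, fun h =>
      hbU (hclosed.mem_of_hasLongPath hu (HasLongPath.symm h))⟩
    exact (hmin y ⟨(hLD hy).1, u, huy⟩).not_gt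
      (Set.ncard_lt_ncard (hD.behind_ssubset hb (hLw hy)))

end EndPieces

section TwoSides

variable {V : Type*} {G : SimpleGraph V} {C D K L P₁ P₂ Q T U W : Set V}
  {a b c s t w x x₁ x₂ y y₁ y₂ : V} {k l : ℕ}

theorem ConnectedFrom.not_attachedAt_empty (hC : ConnectedFrom G C a) (hUC : U ⊆ C)
    (hne : U.Nonempty) (ha : a ∉ U) : ¬ AttachedAt G C U ∅ := by
  obtain ⟨x, hx, y, hy, hyU, hxy⟩ := hC U hUC hne ha
  exact fun hat => (hat x hx y hy hxy).elim hyU id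

theorem AttachedAt.inter (hU : AttachedAt G C U {t}) (hW : AttachedAt G C W {s})
    (hts : ¬ (t ∈ W ∧ s ∈ U)) : AttachedAt G C (U ∩ W) {t} ∨ AttachedAt G C (U ∩ W) {s} := by
  by_cases ht : t ∈ W
  · left; grind [AttachedAt]
  · right; grind [AttachedAt]

/-- Uncrossing: otherwise `U ∩ W` is a smaller candidate for `W`, or one of `U ∪ W` and `U \ W` is
closed. -/
theorem ConnectedFrom.subset_of_minimal_attachedAt (hC : ConnectedFrom G C a) (hUC : U ⊆ C)
    (haU : a ∉ U) (hU : AttachedAt G C U {t}) (hx₁ : x₁ ∈ insert t U) (hx₂ : x₂ ∈ insert t U)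
    (hx : x₁ ≠ x₂) (hWC : W ⊆ C) (haW : a ∉ W) (hW : AttachedAt G C W {s})
    (hxW : x₁ ∈ W ∨ x₂ ∈ W)
    (hmin : ∀ W' ⊆ W, x₁ ∈ W' ∨ x₂ ∈ W' → ∀ r, AttachedAt G C W' {r} → W' = W) : W ⊆ U := by
  have hts : ¬ (t ∈ W ∧ s ∈ U) := by
    rintro ⟨ht, hs⟩
    refine hC.not_attachedAt_empty (Set.union_subset hUC hWC) ⟨t, .inr ht⟩ (by grind) ?_
    grind [AttachedAt]
  by_cases hxUW : x₁ ∈ U ∩ W ∨ x₂ ∈ U ∩ W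
  · have hinter : U ∩ W = W := (hU.inter hW hts).elim
      (hmin _ Set.inter_subset_right hxUW t) (hmin _ Set.inter_subset_right hxUW s)
    exact Set.inter_eq_right.1 hinter
  · have htW : t ∈ W := by grind
    obtain ⟨z, hzU, hzW⟩ : ∃ z ∈ U, z ∉ W := by grind
    refine absurd ?_ (hC.not_attachedAt_empty (U := U \ W) (by grind) ⟨z, hzU, hzW⟩ (by grind))
    intro u hu y hy huy
    have := fun hyW => hW y hyW u (hUC hu.1) huy.symm
    grind [hU u hu.1 y hy huy]

theorem ConnectedFrom.exists_isEndPiece_disjointlyLinked [Finite V] (hC : ConnectedFrom G C a)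
    (hx₁ : x₁ ∈ C) (hx₂ : x₂ ∈ C) (hx : x₁ ≠ x₂) :
    ∃ K c, IsEndPiece G C a K c ∧
      (x₁ ∈ K ∨ x₂ ∈ K ∨ DisjointlyLinked G (C \ K) x₁ x₂ a c) := by
  obtain ⟨W, ⟨hWC, haW, hxW, s, hW⟩, hmin⟩ := Set.exists_min_image
    {W | W ⊆ C ∧ a ∉ W ∧ (x₁ ∈ W ∨ x₂ ∈ W) ∧ ∃ s, AttachedAt G C W {s}} Set.ncard
    (Set.toFinite _) ⟨C \ {a}, by grind, by grind, by grind, a, by grind [AttachedAt]⟩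
  obtain ⟨K, c, hKW, hK⟩ := hC.exists_isEndPiece_subset hWC (hxW.elim (⟨_, ·⟩) (⟨_, ·⟩)) haW hW
  refine ⟨K, c, hK, ?_⟩
  by_cases hx₁K : x₁ ∈ K
  · exact .inl hx₁K
  by_cases hx₂K : x₂ ∈ K
  · exact .inr (.inl hx₂K)
  refine .inr (.inr (disjointlyLinked_of_forall_not_isBarrier ⟨hx₁, hx₁K⟩ ⟨hx₂, hx₂K⟩ ?_))
  intro U t hU
  have hUC : U ⊆ C \ K := hU.subset
  have hacU : a ∉ U ∧ c ∉ U := by grind [hU.disjoint_target]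
  have hUt : AttachedAt G C U {t} := by
    intro u hu y hy huy
    have hyK : y ∉ K := fun hyK => by grind [hK.attachedAt y hyK u (hUC hu).1 huy.symm]
    exact hU.attachedAt u hu y ⟨hy, hyK⟩ huy
  have hWU : W ⊆ U := hC.subset_of_minimal_attachedAt (by grind) hacU.1 hUt
    (hU.source_subset (by simp)) (hU.source_subset (by simp)) hx hWC haW hW hxW
    fun W' hW' hxW' r hr => Set.eq_of_subset_of_ncard_le hW'
      (hmin W' ⟨hW'.trans hWC, fun h => haW (hW' h), hxW', r, hr⟩)
  obtain ⟨z, hz⟩ := hK.nonempty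
  exact (hUC (hWU (hKW hz))).2 hz

theorem IsEndPiece.hasLongPath_through (hK : IsEndPiece G C a K c) (hC : ConnectedFrom G C a)
    (ha : a ∈ C) (h : HasLongPath G (insert c K) c x k) : HasLongPath G C a x k :=
  ((hK.hasLongPath_apex hC ha).append h (by grind)).mono
    (Set.union_subset Set.sdiff_subset hK.insert_subset) (Nat.zero_add k).ge

theorem HasLongPath.zigzag (h₁ : HasLongPath G P₁ a x₁ 0) (hxy₁ : G.Adj x₁ y₁)
    (h₂ : HasLongPath G T y₁ y₂ l) (hxy₂ : G.Adj x₂ y₂) (h₃ : HasLongPath G P₂ x₂ x k)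
    (hxy : G.Adj x y) (h₄ : HasLongPath G Q y b 0) (hP : Disjoint P₁ P₂) (hTQ : Disjoint T Q)
    (hPC : P₁ ∪ P₂ ⊆ C) (hTD : T ∪ Q ⊆ D) (hCD : Disjoint C D) :
    HasLongPath G (C ∪ D) a b (k + l + 3) := by
  have hstart := h₁.bridge hxy₁ h₂ (hCD.mono (by grind) (by grind))
  have hend := h₃.bridge hxy h₄ (hCD.mono (by grind) (by grind))
  have hdisj : Disjoint (P₁ ∪ T) (P₂ ∪ Q) := by
    rw [Set.union_subset_iff] at hPC hTD
    rw [Set.disjoint_left] at hP hTQ hCD ⊢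
    grind
  exact (hstart.bridge hxy₂.symm hend hdisj).mono (by grind) (by lia)

/-- Disjoint sides `C` and `D`, connected from `a` and `b`, such that no vertex of `D` has two
neighbours in `C`. Both `IsSplit G C D a b` and `IsSplit G D C b a` hold when the edges between `C`
and `D` form a matching. -/
structure IsSplit (G : SimpleGraph V) (C D : Set V) (a b : V) : Prop where
  disjoint : Disjoint C D
  left_mem : a ∈ C
  right_mem : b ∈ D
  left_connected : ConnectedFrom G C a
  right_connected : ConnectedFrom G D b
  unique : ∀ y ∈ D, ∀ x ∈ C, ∀ x' ∈ C, G.Adj x y → G.Adj x' y → x = x'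
  nontrivial : (D \ {b}).Nonempty

theorem IsSplit.hasLongPath_of_adj (h : IsSplit G C D a b) (hK : IsEndPiece G C a K c)
    (hL : IsEndPiece G D b L w) (hxy : G.Adj x y) (hKp : HasLongPath G (insert c K) c x k)
    (hLp : HasLongPath G (insert w L) w y l) : HasLongPath G (C ∪ D) a b (k + 1 + l) :=
  (hK.hasLongPath_through h.left_connected h.left_mem hKp).bridge hxy
    (hL.hasLongPath_through h.right_connected h.right_mem hLp).symm h.disjoint

theorem IsSplit.hasLongPath_of_disjointlyLinked (h : IsSplit G C D a b)
    (hK : IsEndPiece G C a K c) (hlink : DisjointlyLinked G (C \ K) x₁ x₂ a c)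
    (hKp : HasLongPath G (insert c K) c x k) (hxy₁ : G.Adj x₁ y₁) (hxy₂ : G.Adj x₂ y₂)
    (hT : HasLongPath G T y₁ y₂ l) (hxy : G.Adj x y) (hQ : HasLongPath G Q y b 0)
    (hTQ : Disjoint T Q) (hTD : T ∪ Q ⊆ D) : HasLongPath G (C ∪ D) a b (k + l + 3) := by
  obtain ⟨P₁, P₂, hP₁, hP₂, hP, ⟨h₁, h₂⟩ | ⟨h₂, h₁⟩⟩ := hlink
  · have hc : c ∈ P₂ := h₂.right_mem
    exact ((h₁.symm.zigzag hxy₁ hT hxy₂ (h₂.append hKp (by grind)) hxy hQ (by grind) hTQ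
      (by grind [hK.insert_subset]) hTD h.disjoint)).mono subset_rfl (by lia)
  · have hc : c ∈ P₁ := h₂.right_mem
    exact ((h₁.symm.zigzag hxy₂ hT.symm hxy₁ (h₂.append hKp (by grind)) hxy hQ (by grind) hTQ
      (by grind [hK.insert_subset]) hTD h.disjoint)).mono subset_rfl (by lia)

/-- The path runs from `a` to an end piece `L` of `D`, back into an end piece `K` of `C` and then to
`b`; if `K` happens to be adjacent to an end piece of `D`, it crosses only once. -/
theorem IsSplit.hasLongPath_of_pass [Finite V] (h : IsSplit G C D a b) {M : ℕ}
    (pass_left : ∀ K c, IsEndPiece G C a K c → ∀ x ∈ K, HasLongPath G (insert c K) c x M)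
    (pass_right_apex : ∀ L w, IsEndPiece G D b L w → ∀ y ∈ L,
      HasLongPath G (insert w L) w y (M + 1))
    (pass_right : ∀ L w, IsEndPiece G D b L w → ∀ y ∈ L, ∀ y' ∈ L, y ≠ y' →
      HasLongPath G (insert w L) y y' (M + 1))
    (exit_left : ∀ K c, IsEndPiece G C a K c → ∀ t, ∃ y ∈ D, y ≠ t ∧ ∃ x ∈ K, G.Adj x y)
    (exit_right : ∀ L w, IsEndPiece G D b L w → ∃ x ∈ C, ∃ x' ∈ C, x ≠ x' ∧
      (∃ y ∈ L, G.Adj x y) ∧ ∃ y ∈ L, G.Adj x' y) :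
    HasLongPath G (C ∪ D) a b (2 * (M + 1)) := by
  obtain ⟨w, ⟨v, hv⟩, hend⟩ :=
    h.right_connected.exists_isEndPiece_component h.right_mem h.nontrivial
  have hL := hend v hv
  have hone_crossing : ∀ {K c L x y}, IsEndPiece G C a K c → IsEndPiece G D b L w → x ∈ K →
      y ∈ L → G.Adj x y → HasLongPath G (C ∪ D) a b (2 * (M + 1)) :=
    fun hK hL hx hy hxy => (h.hasLongPath_of_adj hK hL hxy (pass_left _ _ hK _ hx)
      (pass_right_apex _ _ hL _ hy)).mono subset_rfl (by lia)
  obtain ⟨x₁, hx₁, x₂, hx₂, hx₁₂, ⟨y₁, hy₁, hxy₁⟩, ⟨y₂, hy₂, hxy₂⟩⟩ := exit_right _ w hL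
  have hy₁₂ : y₁ ≠ y₂ := by
    rintro rfl
    exact hx₁₂ (h.unique y₁ (hL.subset hy₁) x₁ hx₁ x₂ hx₂ hxy₁ hxy₂)
  obtain ⟨K, c, hK, hx₁K | hx₂K | hlink⟩ :=
    h.left_connected.exists_isEndPiece_disjointlyLinked hx₁ hx₂ hx₁₂
  · exact hone_crossing hK hL hx₁K hy₁ hxy₁
  · exact hone_crossing hK hL hx₂K hy₂ hxy₂
  obtain ⟨y, hyD, hyw, x, hxK, hxy⟩ := exit_left K c hK w
  by_cases hy : y ∈ component G (D \ {w}) b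
  · have hsep : Disjoint (insert w (component G (D \ {w}) v)) (component G (D \ {w}) b) := by
      have hbw : component G (D \ {w}) b ⊆ D \ {w} := component_subset
      have hvb := component_subset_behind hv
      grind [behind]
    exact (h.hasLongPath_of_disjointlyLinked hK hlink (pass_left K c hK x hxK) hxy₁ hxy₂
      (pass_right _ w hL y₁ hy₁ y₂ hy₂ hy₁₂) hxy (hasLongPath_component_root hy).symm hsep
      (Set.union_subset hL.insert_subset fun z hz => (component_subset hz).1)).mono
      subset_rfl (by lia)
  · have hyw' : y ∈ D \ {w} := ⟨hyD, hyw⟩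
    exact hone_crossing hK (hend y ⟨hyw', hy⟩) hxK (self_mem_component hyw') hxy

end TwoSides

section Degrees

variable {V : Type*} {G : SimpleGraph V} {C K S T : Set V} {a b c d e v w x y z : V} {k m : ℕ}

/-- The number of neighbours of `v` in `S`. -/
noncomputable def degIn (G : SimpleGraph V) (S : Set V) (v : V) : ℕ :=
  (S ∩ G.neighborSet v).ncard

theorem degIn_le_of_forall_adj [Finite V] (h : ∀ y ∈ S, G.Adj v y → y ∈ T) :
    degIn G S v ≤ degIn G T v :=
  Set.ncard_le_ncard fun y hy => ⟨h y hy.1 hy.2, hy.2⟩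

theorem degIn_le_add_one_of_forall_adj [Finite V] (h : ∀ y ∈ S, G.Adj v y → y ∈ T ∨ y = w) :
    degIn G S v ≤ degIn G T v + 1 := by
  have hsub : S ∩ G.neighborSet v ⊆ insert w (T ∩ G.neighborSet v) :=
    fun y hy => (h y hy.1 hy.2).elim (fun hT => .inr ⟨hT, hy.2⟩) .inl
  exact (Set.ncard_le_ncard hsub).trans (Set.ncard_insert_le _ _)

theorem exists_adj_ne_of_two_le_degIn [Finite V] (h : 2 ≤ degIn G S v) (x : V) :
    ∃ y ∈ S, G.Adj v y ∧ y ≠ x := by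
  have hlt : ({x} : Set V).ncard < degIn G S v := by
    rw [Set.ncard_singleton]
    exact h
  obtain ⟨y, ⟨hyS, hvy⟩, hyx⟩ := Set.exists_mem_notMem_of_ncard_lt_ncard hlt
  exact ⟨y, hyS, hvy, hyx⟩

theorem exists_adj_ne_ne_of_three_le_degIn [Finite V] (h : 3 ≤ degIn G S v) (x y : V) :
    ∃ w ∈ S, G.Adj v w ∧ w ≠ x ∧ w ≠ y := by
  have hlt : ({x, y} : Set V).ncard < degIn G S v := by
    have := Set.ncard_insert_le x {y}
    rw [Set.ncard_singleton] at this
    lia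
  obtain ⟨w, ⟨hw, hvw⟩, hwxy⟩ := Set.exists_mem_notMem_of_ncard_lt_ncard hlt
  exact ⟨w, hw, hvw, by grind⟩

theorem not_adj_of_cliqueFree_three (hG : G.CliqueFree 3) (hxy : G.Adj x y) (hyz : G.Adj y z) :
    ¬ G.Adj x z := by
  classical
  exact fun hxz => hG {x, y, z} (SimpleGraph.is3Clique_triple_iff.2 ⟨hxy, hxz, hyz⟩)

/-- The hypotheses of the main induction on the vertex set `S`: all vertices other than `a`, `b` and
one exceptional vertex `z` have at least `m + 2` neighbours in `S`, and there is such a vertex. No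
exception is allowed for by choosing `z = a`. -/
structure IsAdmissible (G : SimpleGraph V) (m : ℕ) (S : Set V) (a b z : V) : Prop where
  ne : a ≠ b
  left_mem : a ∈ S
  right_mem : b ∈ S
  twoConnectedBetween : TwoConnectedBetween G S a b
  le_degIn : ∀ v ∈ S, v ≠ a → v ≠ b → v ≠ z → m + 2 ≤ degIn G S v
  exists_ne : ∃ v ∈ S, v ≠ a ∧ v ≠ b ∧ v ≠ z

/-- The conclusion of the main induction for the vertex set `S`. -/
def ForcesLongPath (G : SimpleGraph V) (m : ℕ) (S : Set V) : Prop :=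
  ∀ a b z, IsAdmissible G m S a b z → HasLongPath G S a b (2 ^ (m + 1))

namespace IsEndPiece

theorem degIn_le [Finite V] (h : IsEndPiece G C a K c) (hv : v ∈ K) :
    degIn G C v ≤ degIn G (insert c K) v :=
  degIn_le_of_forall_adj fun y hy hvy => (h.attachedAt v hv y hy hvy).symm

theorem exists_ne_ne [Finite V] (h : IsEndPiece G C a K c) (hG : G.CliqueFree 3) (hx : x ∈ K)
    (hxe : x ≠ e) (hdeg : 2 ≤ degIn G C x) : ∃ v ∈ K, v ≠ x ∧ v ≠ e := by
  by_contra! hK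
  have hxC : ∀ y ∈ C, G.Adj x y → y ∈ K ∧ y = e ∨ y = c := by
    intro y hy hxy
    have := h.attachedAt x hx y hy hxy
    have := hxy.ne
    grind
  obtain ⟨y, hy, hxy, hyc⟩ := exists_adj_ne_of_two_le_degIn hdeg c
  obtain ⟨z, hz, hxz, hze⟩ := exists_adj_ne_of_two_le_degIn hdeg e
  obtain ⟨hyK, rfl⟩ := (hxC y hy hxy).resolve_right hyc
  obtain rfl : z = c := (hxC z hz hxz).resolve_left fun hze' => hze hze'.2
  refine h.minimal {y} (by simpa using hyK) ⟨y, rfl⟩ (by grind) x ?_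
  intro u hu q hq huq
  obtain rfl : u = y := hu
  have := h.attachedAt u hyK q hq huq
  have := not_adj_of_cliqueFree_three hG hxy huq
  grind

theorem hasLongPath_apex_mem [Finite V] (h : IsEndPiece G C a K c) (hG : G.CliqueFree 3)
    (IH : ∀ S, ForcesLongPath G m S) (hdeg : ∀ v ∈ K, v ≠ e → m + 2 ≤ degIn G C v)
    (hKe : K ≠ {e}) (hx : x ∈ K) : HasLongPath G (insert c K) c x (2 ^ (m + 1)) := by
  have hcK := h.apex_notMem
  have hthird : ∃ v ∈ K, v ≠ x ∧ v ≠ e := by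
    by_cases hxe : x = e
    · grind [Set.eq_singleton_iff_unique_mem]
    · exact h.exists_ne_ne hG hx hxe (by have := hdeg x hx hxe; lia)
  refine IH _ c x e
    ⟨by grind, .inl rfl, .inr hx, h.twoConnectedBetween_apex hx, fun v hv hvc _ hve => ?_, by grind⟩
  have hvK := hv.resolve_left hvc
  exact (hdeg v hvK hve).trans (h.degIn_le hvK)

theorem hasLongPath_mem_mem [Finite V] (h : IsEndPiece G C a K c) (hC : ConnectedFrom G C a)
    (hG : G.CliqueFree 3) (IH : ∀ S, ForcesLongPath G m S)
    (hdeg : ∀ v ∈ K, m + 2 ≤ degIn G C v) (hx : x ∈ K) (hy : y ∈ K) (hxy : x ≠ y) :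
    HasLongPath G (insert c K) x y (2 ^ (m + 1)) := by
  have hcK := h.apex_notMem
  have hthird := h.exists_ne_ne hG hx hxy (by have := hdeg x hx; lia)
  refine IH _ x y c
    ⟨hxy, .inr hx, .inr hy, h.twoConnectedBetween hC hx hy hxy, fun v hv _ _ hvc => ?_, by grind⟩
  have hvK := hv.resolve_left hvc
  exact (hdeg v hvK).trans (h.degIn_le hvK)

end IsEndPiece

theorem HasLongPath.subdivide (hzc : G.Adj z c) (hzd : G.Adj z d) (hz : z ∉ T)
    (h : HasLongPath (G ⊔ SimpleGraph.edge c d) T a b k) : HasLongPath G (insert z T) a b k := by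
  obtain ⟨p, hp, hT, hk⟩ := h
  refine HasLongPath.mono ?_ subset_rfl hk
  clear hk
  induction p generalizing T with
  | nil => exact .refl (.inr (hT _ (by simp)))
  | @cons u v b huv p ih =>
    rw [SimpleGraph.Walk.cons_isPath_iff] at hp
    have hu : u ∈ T := hT u (by simp)
    have hpT : ∀ w ∈ p.support, w ∈ T \ {u} := fun w hw =>
      ⟨hT w (by simp [hw]), fun hwu => hp.2 (hwu ▸ hw)⟩
    rw [SimpleGraph.Walk.length_cons]
    rw [SimpleGraph.sup_adj, SimpleGraph.edge_adj] at huv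
    obtain huv | ⟨huv, -⟩ := huv
    · exact ((ih (by grind) hp.1 hpT).cons huv (by grind)).mono (by grind) le_rfl
    · have hpG : HasLongPath G (T \ {u}) v b p.length :=
        HasLongPath.transfer ⟨p, hp.1, hpT, le_rfl⟩ fun x hx y hy hxy => by
          rw [SimpleGraph.sup_adj, SimpleGraph.edge_adj] at hxy
          grind
      have hzv : G.Adj z v ∧ G.Adj z u := by grind
      exact ((hpG.cons hzv.1 (by grind)).cons hzv.2.symm (by grind)).mono (by grind) (by lia)

end Degrees

section ReducedSplits

variable {V : Type*} {G H : SimpleGraph V} {C D K L S Z : Set V} {a b c p q u v w x y z : V}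
  {m : ℕ}

theorem ConnectedFrom.mono_graph (hGH : G ≤ H) (h : ConnectedFrom G C a) : ConnectedFrom H C a := by
  intro U hU hne ha
  obtain ⟨x, hx, y, hy, hyU, hxy⟩ := h U hU hne ha
  exact ⟨x, hx, y, hy, hyU, hGH hxy⟩

/-- Every set of vertices of `S` avoiding `a` and `b` that is cut off by two vertices `u`, `v` is
either contained in `{z}` or all of `S \ {u, v}`. -/
def NoTwoCut (G : SimpleGraph V) (S : Set V) (a b z : V) : Prop :=
  ∀ Z ⊆ S, a ∉ Z → b ∉ Z → (∃ v ∈ Z, v ≠ z) → ∀ u v, AttachedAt G S Z {u, v} → S ⊆ Z ∪ {u, v}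

theorem NoTwoCut.not_attachedAt (h : NoTwoCut G S a b z) (hZ : Z ⊆ S) (ha : a ∉ Z) (hb : b ∉ Z)
    (hne : ∃ v ∈ Z, v ≠ z) (hp : p ∈ S \ Z) (hq : q ∈ S \ Z) (hpq : p ≠ q) (hpu : p ≠ u)
    (hqu : q ≠ u) : ¬ AttachedAt G S Z {u, v} := by
  intro hat
  have hS := h Z hZ ha hb hne u v hat
  have := hS hp.1
  have := hS hq.1
  grind

theorem IsSplit.degIn_le [Finite V] (h : IsSplit G C D a b) (hv : v ∈ D) :
    degIn G (C ∪ D) v ≤ degIn G D v + 1 := by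
  obtain ⟨x, hx⟩ : ∃ x, ∀ y ∈ C, G.Adj v y → y = x := by
    by_cases hC : ∃ x ∈ C, G.Adj v x
    · obtain ⟨x, hx, hvx⟩ := hC
      exact ⟨x, fun y hy hvy => h.unique v hv y hy x hx hvy.symm hvx.symm⟩
    · exact ⟨v, fun y hy hvy => absurd ⟨y, hy, hvy⟩ hC⟩
  exact degIn_le_add_one_of_forall_adj fun y hy hvy => hy.symm.imp_right fun hyC => hx y hyC hvy

/-- A split along a matching of the vertex set of an admissible configuration without 2-cuts, with
the exceptional vertex not in `D`. -/
structure IsReducedSplit (G : SimpleGraph V) (m : ℕ) (C D : Set V) (a b z : V) : Prop where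
  split : IsSplit G C D a b
  split_symm : IsSplit G D C b a
  admissible : IsAdmissible G m (C ∪ D) a b z
  noTwoCut : NoTwoCut G (C ∪ D) a b z
  notMem_right : z ∉ D

namespace IsReducedSplit

theorem left_degIn [Finite V] (h : IsReducedSplit G (m + 1) C D a b z) (hv : v ∈ C) (hva : v ≠ a)
    (hvz : v ≠ z) : m + 2 ≤ degIn G C v := by
  have hvb : v ≠ b := h.split.disjoint.ne_of_mem hv h.split.right_mem
  have hS := h.admissible.le_degIn v (.inl hv) hva hvb hvz
  have hC := h.split_symm.degIn_le hv
  rw [Set.union_comm] at hC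
  lia

theorem right_degIn [Finite V] (h : IsReducedSplit G (m + 1) C D a b z) (hv : v ∈ D)
    (hvb : v ≠ b) : m + 2 ≤ degIn G D v := by
  have hva : v ≠ a := (h.split.disjoint.ne_of_mem h.split.left_mem hv).symm
  have hS := h.admissible.le_degIn v (.inr hv) hva hvb fun hvz => h.notMem_right (hvz ▸ hv)
  have hD := h.split.degIn_le hv
  lia

theorem hasLongPath_apex_right [Finite V] (h : IsReducedSplit G (m + 1) C D a b z)
    (hG : G.CliqueFree 3) (IH : ∀ S, ForcesLongPath G m S) (hL : IsEndPiece G D b L w)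
    (hy : y ∈ L) : HasLongPath G (insert w L) w y (2 ^ (m + 1)) :=
  hL.hasLongPath_apex_mem (e := w) hG IH
    (fun _ hv _ => h.right_degIn (hL.subset hv) (ne_of_mem_of_not_mem hv hL.root_notMem))
    (fun hLw => hL.apex_notMem (hLw ▸ rfl)) hy

theorem hasLongPath_right [Finite V] (h : IsReducedSplit G (m + 1) C D a b z)
    (hG : G.CliqueFree 3) (IH : ∀ S, ForcesLongPath G m S) (hL : IsEndPiece G D b L w)
    (hx : x ∈ L) (hy : y ∈ L) (hxy : x ≠ y) : HasLongPath G (insert w L) x y (2 ^ (m + 1)) :=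
  hL.hasLongPath_mem_mem h.split.right_connected hG IH
    (fun _ hv => h.right_degIn (hL.subset hv) (ne_of_mem_of_not_mem hv hL.root_notMem)) hx hy hxy

theorem not_attachedAt_left (h : IsReducedSplit G m C D a b z) (hZ : Z ⊆ C) (ha : a ∉ Z)
    (hne : ∃ v ∈ Z, v ≠ z) (hu : u ∈ C) : ¬ AttachedAt G (C ∪ D) Z {u, v} := by
  obtain ⟨q, hq, hqb⟩ := h.split.nontrivial
  have hb := h.split.right_mem
  have hCD := h.split.disjoint
  rw [Set.disjoint_left] at hCD
  exact h.noTwoCut.not_attachedAt (p := b) (q := q) (by grind) ha (by grind) hne (by grind)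
    (by grind) (by grind) (by grind) (by grind)

theorem exit_left (h : IsReducedSplit G m C D a b z) (hK : IsEndPiece G C a K c) (hKz : K ≠ {z})
    (t : V) : ∃ y ∈ D, y ≠ t ∧ ∃ x ∈ K, G.Adj x y := by
  by_contra! hexit
  obtain ⟨k, hk⟩ := hK.nonempty
  refine h.not_attachedAt_left (v := t) hK.subset hK.root_notMem ?_ hK.apex_mem ?_
  · by_contra! hK'
    exact hKz (Set.eq_singleton_iff_unique_mem.2 ⟨hK' k hk ▸ hk, hK'⟩)
  · intro x hx y hy hxy
    have := hK.attachedAt x hx y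
    grind

theorem exit_right (h : IsReducedSplit G m C D a b z) (hL : IsEndPiece G D b L w) :
    ∃ x ∈ C, ∃ x' ∈ C, x ≠ x' ∧ (∃ y ∈ L, G.Adj x y) ∧ ∃ y ∈ L, G.Adj x' y := by
  by_contra! hexit
  obtain ⟨x₁, hx₁⟩ : ∃ x₁, ∀ x ∈ C, ∀ y ∈ L, G.Adj x y → x = x₁ := by
    by_cases hx : ∃ x ∈ C, ∃ y ∈ L, G.Adj x y
    · obtain ⟨x₁, hx₁, hy₁⟩ := hx
      exact ⟨x₁, by grind⟩
    · exact ⟨a, by grind⟩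
  obtain ⟨q, hq, hqa⟩ := h.split_symm.nontrivial
  obtain ⟨l, hl⟩ := hL.nonempty
  have hLD := hL.insert_subset
  have ha := h.split.left_mem
  have hz := h.notMem_right
  have hCD := h.split.disjoint
  rw [Set.disjoint_left] at hCD
  refine h.noTwoCut.not_attachedAt (Z := L) (p := a) (q := q) (u := w) (v := x₁) (by grind)
    (by grind) hL.root_notMem ⟨l, hl, by grind⟩ (by grind) (by grind) (by grind) (by grind)
    (by grind) ?_
  intro y hy x hx hyx
  have := hL.attachedAt y hy x
  have := hyx.symm
  grind

theorem hasLongPath_of_forall_ne [Finite V] (h : IsReducedSplit G (m + 1) C D a b z)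
    (hG : G.CliqueFree 3) (IH : ∀ S, ForcesLongPath G m S)
    (hz : ∀ K c, IsEndPiece G C a K c → K ≠ {z}) :
    HasLongPath G (C ∪ D) a b (2 ^ (m + 2)) := by
  have hM : 2 ^ (m + 1) - 1 + 1 = 2 ^ (m + 1) := Nat.sub_add_cancel Nat.one_le_two_pow
  have hpath := h.split.hasLongPath_of_pass (M := 2 ^ (m + 1) - 1)
    (fun K c hK x hx => (hK.hasLongPath_apex_mem hG IH (fun v hv hvz => h.left_degIn
      (hK.subset hv) (ne_of_mem_of_not_mem hv hK.root_notMem) hvz) (hz K c hK) hx).mono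
        subset_rfl (Nat.sub_le _ _))
    (fun L w hL y hy => hM ▸ h.hasLongPath_apex_right hG IH hL hy)
    (fun L w hL y hy y' hy' hne => hM ▸ h.hasLongPath_right hG IH hL hy hy' hne)
    (fun K c hK => h.exit_left hK (hz K c hK)) (fun L w hL => h.exit_right hL)
  rwa [hM, ← pow_succ'] at hpath

end IsReducedSplit

/-- `z` is a vertex of `C` other than `a` whose only neighbour in `C` is `c` and whose only
neighbour in `D` is `d`. This is the only way for `{z}` to be an end piece of `C`. -/
structure IsLeaf (G : SimpleGraph V) (C D : Set V) (a z c d : V) : Prop where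
  mem : z ∈ C
  ne_root : z ≠ a
  left_mem : c ∈ C
  left_adj : G.Adj z c
  left_unique : ∀ y ∈ C, G.Adj z y → y = c
  right_mem : d ∈ D
  right_adj : G.Adj z d
  right_unique : ∀ y ∈ D, G.Adj z y → y = d

theorem IsReducedSplit.exists_isLeaf (h : IsReducedSplit G m C D a b z) (hz : z ∈ C) (hza : z ≠ a)
    (hat : AttachedAt G C {z} {u}) : ∃ c d, IsLeaf G C D a z c d := by
  have hzb : z ≠ b := h.split.disjoint.ne_of_mem hz h.split.right_mem
  have hnbr : ∀ t, ∃ y ∈ C ∪ D, G.Adj z y ∧ y ≠ t := by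
    intro t
    by_contra! ht
    refine h.admissible.twoConnectedBetween {z} (by simp [hz]) ⟨z, rfl⟩ hza.symm hzb.symm t ?_
    grind [AttachedAt]
  have hzC : ∀ y ∈ C, G.Adj z y → y = u := fun y hy hzy =>
    (hat z rfl y hy hzy).resolve_left hzy.ne'
  obtain ⟨d, hd, hzd, hdu⟩ := hnbr u
  have hdD : d ∈ D := hd.resolve_left fun hdC => hdu (hzC d hdC hzd)
  have hzD : ∀ y ∈ D, G.Adj z y → y = d := fun y hy hzy =>
    h.split_symm.unique z hz y hy d hdD hzy.symm hzd.symm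
  obtain ⟨c, hc, hzc, hcd⟩ := hnbr d
  have hcC : c ∈ C := hc.resolve_right fun hcD => hcd (hzD c hcD hzc)
  exact ⟨c, d, hz, hza, hcC, hzc, fun y hy hzy => (hzC y hy hzy).trans (hzC c hcC hzc).symm,
    hdD, hzd, hzD⟩

end ReducedSplits

section Leaves

variable {V : Type*} {G : SimpleGraph V} {C D K L S Z : Set V} {a b c d u v w x y z : V} {m : ℕ}

namespace IsLeaf

theorem connectedFrom (hl : IsLeaf G C D a z c d) (hC : ConnectedFrom G C a) :
    ConnectedFrom G (C \ {z}) a := by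
  intro U hU hne ha
  by_cases hcU : c ∈ U
  · obtain ⟨x, hx, y, hy, hyU, hxy⟩ := hC (insert z U)
      (Set.insert_subset hl.mem (hU.trans Set.sdiff_subset)) ⟨z, .inl rfl⟩ (by grind [hl.ne_root])
    have := hl.left_unique y hy
    exact ⟨x, by grind, y, by grind, by grind, hxy⟩
  · obtain ⟨x, hx, y, hy, hyU, hxy⟩ := hC U (hU.trans Set.sdiff_subset) hne ha
    have := hl.left_unique x (hU hx).1
    have := hxy.symm
    exact ⟨x, hx, y, by grind, hyU, hxy⟩

theorem adj_left_iff (hl : IsLeaf G C D a z c d) (hCD : Disjoint C D) (hx : x ∈ C) (hy : y ∈ C) :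
    (G ⊔ SimpleGraph.edge c d).Adj x y ↔ G.Adj x y := by
  have hdC : d ∉ C := hCD.notMem_of_mem_right hl.right_mem
  rw [SimpleGraph.sup_adj, SimpleGraph.edge_adj]
  grind

theorem adj_right_iff (hl : IsLeaf G C D a z c d) (hCD : Disjoint C D) (hx : x ∈ D) (hy : y ∈ D) :
    (G ⊔ SimpleGraph.edge c d).Adj x y ↔ G.Adj x y := by
  have hcD : c ∉ D := hCD.notMem_of_mem_left hl.left_mem
  rw [SimpleGraph.sup_adj, SimpleGraph.edge_adj]
  grind

theorem adj_cross_iff (hl : IsLeaf G C D a z c d) (hCD : Disjoint C D) (hx : x ∈ C) (hy : y ∈ D) :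
    (G ⊔ SimpleGraph.edge c d).Adj x y ↔ G.Adj x y ∨ x = c ∧ y = d := by
  have hcD : c ∉ D := hCD.notMem_of_mem_left hl.left_mem
  have hxy : x ≠ y := hCD.ne_of_mem hx hy
  rw [SimpleGraph.sup_adj, SimpleGraph.edge_adj]
  grind

theorem isSplit (hl : IsLeaf G C D a z c d) (h : IsSplit G C D a b) :
    IsSplit (G ⊔ SimpleGraph.edge c d) (C \ {z}) D a b where
  disjoint := h.disjoint.mono_left Set.sdiff_subset
  left_mem := ⟨h.left_mem, hl.ne_root.symm⟩
  right_mem := h.right_mem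
  left_connected := (hl.connectedFrom h.left_connected).mono_graph le_sup_left
  right_connected := h.right_connected.mono_graph le_sup_left
  nontrivial := h.nontrivial
  unique := by
    intro y hy x hx x' hx' hxy hxy'
    rw [hl.adj_cross_iff h.disjoint hx.1 hy] at hxy
    rw [hl.adj_cross_iff h.disjoint hx'.1 hy] at hxy'
    have hz := fun x hx hxd => h.unique d hl.right_mem x hx z hl.mem hxd hl.right_adj
    have := h.unique y hy x hx.1 x' hx'.1
    grind

theorem isEndPiece_left (hl : IsLeaf G C D a z c d) (hCD : Disjoint C D)
    (hK : IsEndPiece (G ⊔ SimpleGraph.edge c d) (C \ {z}) a K w) :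
    IsEndPiece G (C \ {z}) a K w :=
  hK.congr fun _ hx _ hy => hl.adj_left_iff hCD hx.1 hy.1

theorem isEndPiece_right (hl : IsLeaf G C D a z c d) (hCD : Disjoint C D)
    (hL : IsEndPiece (G ⊔ SimpleGraph.edge c d) D b L w) : IsEndPiece G D b L w :=
  hL.congr fun _ hx _ hy => hl.adj_right_iff hCD hx hy

end IsLeaf

namespace IsReducedSplit

theorem eq_zero_of_isEndPiece_singleton [Finite V] (h : IsReducedSplit G (m + 1) C D a b z)
    (hl : IsLeaf G C D a z c d) (hc : IsEndPiece G (C \ {z}) a {c} w) : m = 0 := by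
  have hca : c ≠ a := fun hca => hc.root_notMem hca.symm
  have hdegC := h.left_degIn hl.left_mem hca hl.left_adj.ne'
  have hdegCz : degIn G C c ≤ degIn G (C \ {z}) c + 1 :=
    degIn_le_add_one_of_forall_adj (w := z) (by grind)
  have hdeg_one : degIn G (C \ {z}) c ≤ 1 := by
    by_contra! hdeg
    obtain ⟨y, hy, hcy, hyw⟩ := exists_adj_ne_of_two_le_degIn hdeg w
    exact (hc.attachedAt c rfl y hy hcy).elim hcy.ne' hyw
  lia

theorem leaf_pass_left [Finite V] (h : IsReducedSplit G (m + 1) C D a b z)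
    (hl : IsLeaf G C D a z c d) (hG : G.CliqueFree 3) (IH : ∀ S, ForcesLongPath G m S)
    (hK : IsEndPiece G (C \ {z}) a K w) (hx : x ∈ K) :
    HasLongPath G (insert w K) w x (2 ^ (m + 1) - 1) := by
  by_cases hKc : K = {c}
  · subst hKc
    obtain rfl : x = c := hx
    obtain rfl : m = 0 := h.eq_zero_of_isEndPiece_singleton hl hK
    obtain ⟨y, rfl, hwy⟩ := hK.exists_adj_apex (hl.connectedFrom h.split.left_connected)
    exact (HasLongPath.refl (Set.mem_singleton y)).cons hwy hK.apex_notMem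
  · refine (hK.hasLongPath_apex_mem hG IH ?_ hKc hx).mono subset_rfl (Nat.sub_le _ _)
    intro v hv hvc
    have hvC := hK.subset hv
    refine (h.left_degIn hvC.1 (ne_of_mem_of_not_mem hv hK.root_notMem) hvC.2).trans
      (degIn_le_of_forall_adj fun y hy hvy => ⟨hy, ?_⟩)
    rintro rfl
    exact hvc (hl.left_unique v hvC.1 hvy.symm)

theorem leaf_exit_left (h : IsReducedSplit G m C D a b z) (hl : IsLeaf G C D a z c d)
    (hK : IsEndPiece G (C \ {z}) a K w) (t : V) :
    ∃ y ∈ D, y ≠ t ∧ ∃ x ∈ K, (G ⊔ SimpleGraph.edge c d).Adj x y := by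
  have hKC : ∀ x ∈ K, x ∈ C ∧ x ≠ z := fun x hx => hK.subset hx
  have hcross : ∀ x ∈ K, ∀ y ∈ D, (G ⊔ SimpleGraph.edge c d).Adj x y ↔ G.Adj x y ∨ x = c ∧ y = d :=
    fun x hx y hy => hl.adj_cross_iff h.split.disjoint (hKC x hx).1 hy
  obtain ⟨k, hk⟩ := hK.nonempty
  have hkz := (hKC k hk).2
  have hza := hl.ne_root
  have ha := hK.root_notMem
  by_contra! hexit
  by_cases hcK : c ∈ K
  · obtain rfl : d = t := by
      by_contra hdt
      exact hexit d hl.right_mem hdt c hcK ((hcross c hcK d hl.right_mem).2 (.inr ⟨rfl, rfl⟩))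
    refine h.not_attachedAt_left (v := d) (Set.insert_subset hl.mem fun x hx => (hKC x hx).1)
      (by grind) ⟨k, .inr hk, hkz⟩ hK.apex_mem.1 ?_
    intro x hx y hy hxy
    have := hl.left_unique y
    have := hl.right_unique y
    have := hK.attachedAt x
    grind
  · refine h.not_attachedAt_left (v := t) (fun x hx => (hKC x hx).1) ha ⟨k, hk, hkz⟩
      hK.apex_mem.1 ?_
    intro x hx y hy hxy
    have := hl.left_unique x (hKC x hx).1
    have := hK.attachedAt x hx y
    have := hxy.symm
    grind

theorem leaf_exit_right (h : IsReducedSplit G m C D a b z) (hl : IsLeaf G C D a z c d)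
    (hv : v ∈ C) (hva : v ≠ a) (hvz : v ≠ z) (hL : IsEndPiece G D b L w) :
    ∃ x ∈ C \ {z}, ∃ x' ∈ C \ {z}, x ≠ x' ∧ (∃ y ∈ L, (G ⊔ SimpleGraph.edge c d).Adj x y) ∧
      ∃ y ∈ L, (G ⊔ SimpleGraph.edge c d).Adj x' y := by
  by_cases hdL : d ∈ L
  · obtain ⟨x, hx, hxc, y, hy, hxy⟩ : ∃ x ∈ C \ {z}, x ≠ c ∧ ∃ y ∈ L, G.Adj x y := by
      by_contra! honly
      obtain ⟨hza, hzb⟩ : z ≠ a ∧ z ≠ b :=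
        ⟨hl.ne_root, h.split.disjoint.ne_of_mem hl.mem h.split.right_mem⟩
      have hzC := hl.mem
      have ha := h.split.left_mem
      have hb := hL.root_notMem
      have hLD := hL.insert_subset
      have hCD := h.split.disjoint
      rw [Set.disjoint_left] at hCD
      refine h.noTwoCut.not_attachedAt (Z := insert z L) (p := a) (q := v) (u := w) (v := c)
        (by grind) (by grind) (by grind) ⟨d, .inr hdL, by grind⟩ (by grind) (by grind)
        hva.symm (by grind) (by grind) ?_
      intro x hx y hy hxy
      have := hl.left_unique y
      have := hl.right_unique y
      have := hL.attachedAt x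
      have := hxy.symm
      grind
    exact ⟨x, hx, c, ⟨hl.left_mem, hl.left_adj.ne'⟩, hxc, ⟨y, hy, .inl hxy⟩, d, hdL,
      (hl.adj_cross_iff h.split.disjoint hl.left_mem hl.right_mem).2 (.inr ⟨rfl, rfl⟩)⟩
  · have hzL : ∀ y ∈ L, ¬ G.Adj z y := fun y hy hzy =>
      hdL (hl.right_unique y (hL.subset hy) hzy ▸ hy)
    obtain ⟨x, hx, x', hx', hne, ⟨y, hy, hxy⟩, ⟨y', hy', hxy'⟩⟩ := h.exit_right hL
    exact ⟨x, ⟨hx, by grind⟩, x', ⟨hx', by grind⟩, hne, ⟨y, hy, .inl hxy⟩, y', hy', .inl hxy'⟩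

theorem hasLongPath_of_isLeaf [Finite V] (h : IsReducedSplit G (m + 1) C D a b z)
    (hl : IsLeaf G C D a z c d) (hG : G.CliqueFree 3) (IH : ∀ S, ForcesLongPath G m S)
    (hv : v ∈ C) (hva : v ≠ a) (hvz : v ≠ z) : HasLongPath G (C ∪ D) a b (2 ^ (m + 2)) := by
  have hM : 2 ^ (m + 1) - 1 + 1 = 2 ^ (m + 1) := Nat.sub_add_cancel Nat.one_le_two_pow
  have hCD := h.split.disjoint
  have hadd : ∀ {S x y k}, HasLongPath G S x y k →
      HasLongPath (G ⊔ SimpleGraph.edge c d) S x y k :=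
    fun hp => hp.transfer fun _ _ _ _ hxy => .inl hxy
  have hpath := (hl.isSplit h.split).hasLongPath_of_pass (M := 2 ^ (m + 1) - 1)
    (fun K w hK x hx => hadd (h.leaf_pass_left hl hG IH (hl.isEndPiece_left hCD hK) hx))
    (fun L w hL y hy => hM.symm ▸
      hadd (h.hasLongPath_apex_right hG IH (hl.isEndPiece_right hCD hL) hy))
    (fun L w hL y hy y' hy' hne => hM.symm ▸
      hadd (h.hasLongPath_right hG IH (hl.isEndPiece_right hCD hL) hy hy' hne))
    (fun K w hK => h.leaf_exit_left hl (hl.isEndPiece_left hCD hK))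
    (fun L w hL => h.leaf_exit_right hl hv hva hvz (hl.isEndPiece_right hCD hL))
  rw [hM, ← pow_succ'] at hpath
  have hz := h.notMem_right
  exact (hpath.subdivide hl.left_adj hl.right_adj (by grind)).mono (by grind [hl.mem]) le_rfl

theorem leaf_right_ne (h : IsReducedSplit G m C D a b z) (hl : IsLeaf G C D a z c d)
    (hC : ∀ v ∈ C, v = a ∨ v = z) : d ≠ b := by
  rintro rfl
  obtain ⟨w, hw, hwd⟩ := h.split.nontrivial
  have ha := h.split.left_mem
  have hz := h.notMem_right
  have hzC := hl.mem
  have hza := hl.ne_root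
  have hCD := h.split.disjoint
  rw [Set.disjoint_left] at hCD
  have hsub := h.noTwoCut (D \ {d}) (by grind) (by grind) (by grind) ⟨w, ⟨hw, hwd⟩, by grind⟩ a d ?_
    (.inl hzC)
  · grind [hl.right_mem]
  · intro x hx y hy hxy
    have := hl.right_unique x hx.1
    have := hxy.symm
    grind

theorem leaf_twoConnectedBetween (h : IsReducedSplit G m C D a b z) (hl : IsLeaf G C D a z c d)
    (hC : ∀ v ∈ C, v = a ∨ v = z) : TwoConnectedBetween G D d b := by
  rintro U hU ⟨u, hu⟩ hdU hbU t hat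
  have ha := h.split.left_mem
  have hz := h.notMem_right
  have hd := hl.right_mem
  have hCD := h.split.disjoint
  rw [Set.disjoint_left] at hCD
  refine h.noTwoCut.not_attachedAt (Z := U) (p := d) (q := z) (u := a) (v := t) (by grind)
    (by grind) hbU ⟨u, hu, by grind⟩ (by grind) (by grind [hl.mem]) (by grind) (by grind)
    hl.ne_root ?_
  intro x hx y hy hxy
  have := hl.right_unique x (hU hx)
  have := hat x hx y
  have := hxy.symm
  grind

theorem leaf_isAdmissible [Finite V] (h : IsReducedSplit G (m + 1) C D a b z)
    (hl : IsLeaf G C D a z c d) (hG : G.CliqueFree 3) (hC : ∀ v ∈ C, v = a ∨ v = z) :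
    ∃ e, IsAdmissible G (m + 1) D d b e := by
  have hdb := h.leaf_right_ne hl hC
  obtain ⟨e, he⟩ : ∃ e, ∀ y ∈ D, G.Adj a y → y = e := by
    by_cases he : ∃ e ∈ D, G.Adj a e
    · obtain ⟨e, heD, hae⟩ := he
      exact ⟨e, fun y hy hay =>
        h.split_symm.unique a h.split.left_mem y hy e heD hay.symm hae.symm⟩
    · exact ⟨b, fun y hy hay => absurd ⟨y, hy, hay⟩ he⟩
  refine ⟨e, hdb, hl.right_mem, h.split.right_mem, h.leaf_twoConnectedBetween hl hC, ?_, ?_⟩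
  · intro v hv hvd hvb hve
    have ha := h.split.left_mem
    have hCD := h.split.disjoint
    rw [Set.disjoint_left] at hCD
    refine (h.admissible.le_degIn v (.inr hv) (by grind) hvb (by grind [hl.mem])).trans
      (degIn_le_of_forall_adj fun y hy hvy => hy.resolve_left fun hyC => ?_)
    obtain rfl | rfl := hC y hyC
    · exact hve (he v hv hvy.symm)
    · exact hvd (hl.right_unique v hv hvy.symm)
  · by_contra! hD
    have hdeg := h.right_degIn hl.right_mem hdb
    obtain ⟨p, hp, hdp, hpe⟩ := exists_adj_ne_of_two_le_degIn (by lia : 2 ≤ degIn G D d) e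
    obtain ⟨q, hq, hdq, hqb⟩ := exists_adj_ne_of_two_le_degIn (by lia : 2 ≤ degIn G D d) b
    have hdegq := h.right_degIn hq hqb
    obtain ⟨r, hr, hqr, hrd⟩ := exists_adj_ne_of_two_le_degIn (by lia : 2 ≤ degIn G D q) d
    have := hD p hp hdp.ne'
    have := hD q hq hdq.ne'
    have := hD r hr hrd
    have := hqr.ne
    exact not_adj_of_cliqueFree_three hG hdq hqr (by grind)

/-- In the last case `C = {a, z}`, the path starts with the edges `az` and `zd`. -/
theorem hasLongPath [Finite V] (h : IsReducedSplit G (m + 1) C D a b z) (hG : G.CliqueFree 3)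
    (IH : ∀ S, ForcesLongPath G m S)
    (hsize : ∀ T : Set V, T.ncard < (C ∪ D).ncard → ForcesLongPath G (m + 1) T) :
    HasLongPath G (C ∪ D) a b (2 ^ (m + 2)) := by
  by_cases hz : ∀ K c, IsEndPiece G C a K c → K ≠ {z}
  · exact h.hasLongPath_of_forall_ne hG IH hz
  push Not at hz
  obtain ⟨_, u, hu, rfl⟩ := hz
  obtain ⟨c, d, hl⟩ := h.exists_isLeaf (hu.subset rfl) (fun hza => hu.root_notMem hza.symm)
    hu.attachedAt
  have hzC := hl.mem
  by_cases hC : ∃ v ∈ C, v ≠ a ∧ v ≠ z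
  · obtain ⟨v, hv, hva, hvz⟩ := hC
    exact h.hasLongPath_of_isLeaf hl hG IH hv hva hvz
  push Not at hC
  obtain ⟨e, he⟩ := h.leaf_isAdmissible hl hG (by grind)
  obtain rfl : c = a := by grind [hl.left_mem, hl.left_adj.ne]
  have hzD := h.notMem_right
  have hcD : c ∉ D := h.split.disjoint.notMem_of_mem_left hl.left_mem
  have hsub : D ⊂ C ∪ D := ⟨Set.subset_union_right, fun hCD => hzD (hCD (.inl hzC))⟩
  have hpath := hsize D (Set.ncard_lt_ncard hsub) d b e he
  exact ((hpath.cons hl.right_adj hzD).cons hl.left_adj.symm (by grind [hl.ne_root])).mono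
    (by grind [hl.left_mem]) (by lia)

end IsReducedSplit

end Leaves

section TwoCuts

variable {V : Type*} {G : SimpleGraph V} {S T X Z : Set V} {a b u v z : V} {k m : ℕ}

theorem DisjointlyLinked.hasLongPath (h : DisjointlyLinked G X u v a b)
    (huv : HasLongPath G T u v k) (hTX : ∀ w ∈ T, w ∈ X → w = u ∨ w = v) :
    HasLongPath G (X ∪ T) a b k := by
  obtain ⟨P, Q, hP, hQ, hPQ, ⟨hu, hv⟩ | ⟨hu, hv⟩⟩ := h
  all_goals
    have huP := hu.left_mem
    have hvQ := hv.left_mem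
    rw [Set.disjoint_left] at hPQ
  · exact ((hu.symm.append huv (by grind)).append hv (by grind)).mono (by grind) (by lia)
  · exact ((hv.symm.append huv.symm (by grind)).append hu (by grind)).mono (by grind) (by lia)

theorem TwoConnectedBetween.mem_sdiff_of_attachedAt (h : TwoConnectedBetween G S a b) (hZ : Z ⊆ S)
    (hne : Z.Nonempty) (ha : a ∉ Z) (hb : b ∉ Z) (hat : AttachedAt G S Z {u, v}) :
    v ∈ S \ Z ∧ v ≠ u := by
  by_contra hv
  refine h Z hZ hne ha hb u fun x hx y hy hxy => ?_
  have := hat x hx y hy hxy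
  grind

theorem TwoConnectedBetween.disjointlyLinked [Finite V] (h : TwoConnectedBetween G S a b)
    (hZ : Z ⊆ S) (hne : Z.Nonempty) (ha : a ∉ Z) (hb : b ∉ Z) (hat : AttachedAt G S Z {u, v})
    (hu : u ∈ S \ Z) (hv : v ∈ S \ Z) : DisjointlyLinked G (S \ Z) u v a b := by
  refine disjointlyLinked_of_forall_not_isBarrier hu hv fun U t hU => ?_
  have hab := hU.disjoint_target
  refine h (U ∪ Z) (by grind [hU.subset]) hne.inr (by grind) (by grind) t ?_
  have hUat := hU.attachedAt
  have huv := hU.source_subset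
  rintro x (hx | hx) y hy hxy
  · have := hUat x hx y
    grind
  · have := hat x hx y hy hxy
    grind

theorem IsAdmissible.of_attachedAt [Finite V] (h : IsAdmissible G m S a b z) (hZ : Z ⊆ S)
    (hne : ∃ w ∈ Z, w ≠ z) (ha : a ∉ Z) (hb : b ∉ Z) (hat : AttachedAt G S Z {u, v})
    (hu : u ∉ Z) (hv : v ∉ Z) (huv : u ≠ v) : IsAdmissible G m (insert u (insert v Z)) u v z where
  ne := huv
  left_mem := .inl rfl
  right_mem := .inr (.inl rfl)
  twoConnectedBetween U hU hUne huU hvU t hUat := by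
    refine h.twoConnectedBetween U (by grind) hUne (by grind) (by grind) t fun x hx y hy hxy => ?_
    have := hat x (by grind) y hy hxy
    have := hUat x hx y
    grind
  le_degIn w hw hwu hwv hwz := by
    have hwZ : w ∈ Z := by grind
    refine (h.le_degIn w (hZ hwZ) (by grind) (by grind) hwz).trans (degIn_le_of_forall_adj ?_)
    intro y hy hwy
    have := hat w hwZ y hy hwy
    grind
  exists_ne := by
    obtain ⟨w, hw, hwz⟩ := hne
    exact ⟨w, .inr (.inr hw), by grind⟩

/-- If two vertices `u` and `v` cut off `Z`, the long path from `u` to `v` through `Z` given by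
`hsize` extends to `a` and `b` along two disjoint paths outside `Z`. -/
theorem IsAdmissible.noTwoCut_or_hasLongPath [Finite V] (h : IsAdmissible G m S a b z)
    (hsize : ∀ T : Set V, T.ncard < S.ncard → ForcesLongPath G m T) :
    NoTwoCut G S a b z ∨ HasLongPath G S a b (2 ^ (m + 1)) := by
  refine or_iff_not_imp_left.2 fun hcut => ?_
  simp only [NoTwoCut, not_forall] at hcut
  obtain ⟨Z, hZ, ha, hb, hne, u, v, hat, hS⟩ := hcut
  have hZne : Z.Nonempty := hne.imp fun _ => And.left
  have htwo := h.twoConnectedBetween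
  obtain ⟨hv, hvu⟩ := htwo.mem_sdiff_of_attachedAt hZ hZne ha hb hat
  obtain ⟨hu, -⟩ := htwo.mem_sdiff_of_attachedAt hZ hZne ha hb (Set.pair_comm u v ▸ hat)
  have hlt : (insert u (insert v Z)).ncard < S.ncard :=
    Set.ncard_lt_ncard ⟨by grind, fun hsub => hS (by grind)⟩
  have hpath := hsize _ hlt u v z (h.of_attachedAt hZ hne ha hb hat hu.2 hv.2 hvu.symm)
  exact ((htwo.disjointlyLinked hZ hZne ha hb hat hu hv).hasLongPath hpath (by grind)).mono
    (by grind) le_rfl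

end TwoCuts

section MatchingCuts

variable {V : Type*} {G : SimpleGraph V} {S X : Set V} {a b v x y z : V} {m : ℕ}

theorem NoTwoCut.symm (h : NoTwoCut G S a b z) : NoTwoCut G S b a z :=
  fun Z hZ hb ha => h Z hZ ha hb

theorem IsAdmissible.symm (h : IsAdmissible G m S a b z) : IsAdmissible G m S b a z where
  ne := h.ne.symm
  left_mem := h.right_mem
  right_mem := h.left_mem
  twoConnectedBetween U hU hne hb ha := h.twoConnectedBetween U hU hne ha hb
  le_degIn v hv hvb hva := h.le_degIn v hv hva hvb
  exists_ne := by grind [h.exists_ne]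

theorem IsAdmissible.exists_ne_ne [Finite V] (h : IsAdmissible G (m + 1) S a b z)
    (hG : G.CliqueFree 3) (t : V) : ∃ w ∈ S, w ≠ a ∧ w ≠ b ∧ w ≠ z ∧ w ≠ t := by
  obtain ⟨v, hv, hva, hvb, hvz⟩ := h.exists_ne
  by_cases hvt : v = t
  swap
  · exact ⟨v, hv, hva, hvb, hvz, hvt⟩
  subst hvt
  by_contra! hS
  have hdeg : 3 ≤ degIn G S v := by
    have := h.le_degIn v hv hva hvb hvz
    lia
  have hvS : ∀ y ∈ S, G.Adj v y → y = a ∨ y = b ∨ y = z := fun y hy hvy => by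
    have := hvy.ne
    grind
  obtain ⟨p, hp, hvp, hpa, hpb⟩ := exists_adj_ne_ne_of_three_le_degIn hdeg a b
  obtain ⟨q, hq, hvq, hqb, hqp⟩ := exists_adj_ne_ne_of_three_le_degIn hdeg b p
  obtain ⟨r, hr, hvr, hra, hrp⟩ := exists_adj_ne_ne_of_three_le_degIn hdeg a p
  obtain rfl : p = z := by grind
  obtain rfl : q = a := by grind
  obtain rfl : r = b := by grind
  refine h.twoConnectedBetween {p} (by simpa using hp) ⟨p, rfl⟩ hpa.symm hpb.symm v ?_
  intro x hx y hy hxy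
  have := not_adj_of_cliqueFree_three hG hvp (hx ▸ hxy)
  have : y = q ∨ y = r ∨ y = p ∨ y = v := by grind
  grind

theorem IsAdmissible.exists_adj_ne [Finite V] (h : IsAdmissible G (m + 1) S a b z)
    (hG : G.CliqueFree 3) (hcut : NoTwoCut G S a b z) (t : V) : ∃ y ∈ S, G.Adj a y ∧ y ≠ t := by
  have ha := h.left_mem
  have hab := h.ne
  obtain ⟨w, hw, hwa, hwb, hwz, hwt⟩ := h.exists_ne_ne hG t
  by_contra! ht
  by_cases hta : t = a
  · refine h.twoConnectedBetween (S \ {a, b}) Set.sdiff_subset ⟨w, by grind⟩ (by grind) (by grind) b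
      fun x hx y hy hxy => ?_
    have := hxy.symm
    have := hxy.ne
    grind
  · have hS := hcut (S \ {a, b, t}) Set.sdiff_subset (by grind) (by grind) ⟨w, by grind⟩ t b
      fun x hx y hy hxy => by
        have := hxy.symm
        grind
    grind

/-- Any two vertices are separated by a vertex set `X` whose edge boundary is a matching. -/
def HasMatchingCuts (G : SimpleGraph V) : Prop :=
  ∀ a b, a ≠ b → ∃ X : Set V, a ∈ X ∧ b ∉ X ∧
    (∀ x ∈ X, ∀ y ∉ X, ∀ y' ∉ X, G.Adj x y → G.Adj x y' → y = y') ∧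
    ∀ y ∉ X, ∀ x ∈ X, ∀ x' ∈ X, G.Adj x y → G.Adj x' y → x = x'

theorem HasMatchingCuts.cliqueFree_three (h : HasMatchingCuts G) : G.CliqueFree 3 := by
  classical
  intro s hs
  obtain ⟨a, b, c, hab, hac, hbc, -⟩ := SimpleGraph.is3Clique_iff.1 hs
  obtain ⟨X, ha, hb, hX, hX'⟩ := h a b hab.ne
  by_cases hc : c ∈ X
  · exact hac.ne (hX' b hb a ha c hc hab hbc.symm)
  · exact hbc.ne (hX a ha b hb c hc hab hac)

/-- The far side of the split of `S` obtained from the cut `X`: the part containing `b` of what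
remains of `S` after deleting the component of `a` in `S ∩ X`. -/
def farSide (G : SimpleGraph V) (S X : Set V) (a b : V) : Set V :=
  component G (S \ component G (S ∩ X) a) b

theorem farSide_subset : farSide G S X a b ⊆ S \ component G (S ∩ X) a :=
  component_subset

theorem mem_component_of_adj_farSide (hx : x ∈ S \ farSide G S X a b)
    (hy : y ∈ farSide G S X a b) (hxy : G.Adj x y) : x ∈ component G (S ∩ X) a := by
  by_contra hx'
  exact hx.2 (mem_component_of_adj hy ⟨hx.1, hx'⟩ hxy.symm)

theorem mem_and_notMem_of_adj_farSide (hx : x ∈ S \ farSide G S X a b)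
    (hy : y ∈ farSide G S X a b) (hxy : G.Adj x y) : x ∈ X ∧ y ∉ X := by
  have hxa := mem_component_of_adj_farSide hx hy hxy
  obtain ⟨hyS, hya⟩ := farSide_subset hy
  exact ⟨(component_subset hxa).2, fun hyX => hya (mem_component_of_adj hxa ⟨hyS, hyX⟩ hxy)⟩

theorem TwoConnectedBetween.connectedFrom_sdiff_farSide (h : TwoConnectedBetween G S a b)
    (hb : b ∈ farSide G S X a b) : ConnectedFrom G (S \ farSide G S X a b) a := by
  intro U hU hne ha
  by_cases hUa : (U ∩ component G (S ∩ X) a).Nonempty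
  · obtain ⟨x, hx, y, hy, hyU, hxy⟩ :=
      connectedFrom_component _ Set.inter_subset_right hUa fun haU => ha haU.1
    exact ⟨x, hx.1, y, ⟨(component_subset hy).1, fun hyD => (farSide_subset hyD).2 hy⟩,
      fun hyU' => hyU ⟨hyU', hy⟩, hxy⟩
  · by_contra! hclosed
    refine h U (hU.trans Set.sdiff_subset) hne ha (fun hbU => (hU hbU).2 hb) a ?_
    refine fun x hx y hy hxy => .inl (by_contra fun hyU => ?_)
    by_cases hyD : y ∈ farSide G S X a b
    · exact hUa ⟨x, hx, mem_component_of_adj_farSide (hU hx) hyD hxy⟩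
    · exact hclosed x hx y ⟨hy, hyD⟩ hyU hxy

theorem sdiff_singleton_nonempty_of_adj_unique {C D : Set V}
    (hdeg : ∀ t, ∃ y ∈ C ∪ D, G.Adj b y ∧ y ≠ t)
    (hunique : ∀ x ∈ C, ∀ x' ∈ C, G.Adj b x → G.Adj b x' → x = x') : (D \ {b}).Nonempty := by
  obtain ⟨y, hy, hby, -⟩ := hdeg b
  obtain ⟨y', hy', hby', hne⟩ := hdeg y
  by_contra hD
  have hC : ∀ y ∈ C ∪ D, G.Adj b y → y ∈ C := fun y hy hby =>
    hy.resolve_right fun hyD => hD ⟨y, hyD, hby.ne'⟩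
  exact hne (hunique y' (hC y' hy' hby') y (hC y hy hby) hby' hby)

theorem IsAdmissible.exists_isSplit [Finite V] (h : IsAdmissible G (m + 1) S a b z)
    (hG : HasMatchingCuts G) (hcut : NoTwoCut G S a b z) :
    ∃ C D, C ∪ D = S ∧ IsSplit G C D a b ∧ IsSplit G D C b a := by
  obtain ⟨X, haX, hbX, hX, hX'⟩ := hG a b h.ne
  set D := farSide G S X a b
  have ha : a ∈ S \ D :=
    ⟨h.left_mem, fun haD => (farSide_subset haD).2 (self_mem_component ⟨h.left_mem, haX⟩)⟩
  have hb : b ∈ D :=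
    self_mem_component ⟨h.right_mem, fun hba => hbX (component_subset hba).2⟩
  have hcross : ∀ x ∈ S \ D, ∀ y ∈ D, G.Adj x y → x ∈ X ∧ y ∉ X := fun x hx y hy =>
    mem_and_notMem_of_adj_farSide hx hy
  have hDS : S \ D ∪ D = S := Set.sdiff_union_of_subset (farSide_subset.trans Set.sdiff_subset)
  have hright : ∀ y ∈ D, ∀ x ∈ S \ D, ∀ x' ∈ S \ D, G.Adj x y → G.Adj x' y → x = x' := by
    intro y hy x hx x' hx' hxy hxy'
    have := hcross x hx y hy hxy
    exact hX' y this.2 x this.1 x' (hcross x' hx' y hy hxy').1 hxy hxy'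
  have hleft : ∀ x ∈ S \ D, ∀ y ∈ D, ∀ y' ∈ D, G.Adj x y → G.Adj x y' → y = y' := by
    intro x hx y hy y' hy' hxy hxy'
    have := hcross x hx y hy hxy
    exact hX x this.1 y this.2 y' (hcross x hx y' hy' hxy').2 hxy hxy'
  have hC := h.twoConnectedBetween.connectedFrom_sdiff_farSide hb
  refine ⟨S \ D, D, hDS,
    ⟨Set.disjoint_sdiff_left, ha, hb, hC, connectedFrom_component, hright, ?_⟩,
    ⟨Set.disjoint_sdiff_right, hb, ha, connectedFrom_component, hC,
      fun x hx y hy y' hy' hyx hyx' => hleft x hx y hy y' hy' hyx.symm hyx'.symm, ?_⟩⟩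
  · refine sdiff_singleton_nonempty_of_adj_unique (hDS.symm ▸ ?_) fun x hx x' hx' hbx hbx' =>
      hright b hb x hx x' hx' hbx.symm hbx'.symm
    exact h.symm.exists_adj_ne hG.cliqueFree_three hcut.symm
  · refine sdiff_singleton_nonempty_of_adj_unique ?_ (hleft a ha)
    rw [Set.union_comm, hDS]
    exact h.exists_adj_ne hG.cliqueFree_three hcut

end MatchingCuts

section MainInduction

variable {V : Type*} {G : SimpleGraph V} {S : Set V} {a b z : V} {m : ℕ}

theorem forcesLongPath_zero (G : SimpleGraph V) (S : Set V) : ForcesLongPath G 0 S := by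
  intro a b z h
  obtain ⟨v, hv, hva, hvb, -⟩ := h.exists_ne
  have ha := h.left_mem
  have hb := h.right_mem
  have hab := h.ne
  set U := component G (S \ {a, b}) v
  have hU : U ⊆ S \ {a, b} := component_subset
  have hexit : ∀ t, ∃ x ∈ U, ∃ y ∈ ({a, b} : Set V), y ≠ t ∧ G.Adj x y := by
    intro t
    by_contra! hexit
    refine h.twoConnectedBetween U (by grind) ⟨v, self_mem_component (by grind)⟩ (by grind)
      (by grind) t fun x hx y hy hxy => ?_
    by_cases hyab : y ∈ ({a, b} : Set V)
    · exact .inr (by_contra fun hyt => hexit x hx y hyab hyt hxy)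
    · exact .inl (mem_component_of_adj hx ⟨hy, hyab⟩ hxy)
  obtain ⟨x, hx, p, hp, hpb, hxp⟩ := hexit b
  obtain ⟨y, hy, q, hq, hqa, hyq⟩ := hexit a
  obtain rfl : p = a := by grind
  obtain rfl : q = b := by grind
  have hpath := (hasLongPath_component hx hy).cons hxp.symm (by grind)
  exact (hpath.bridge hyq (.refl (Set.mem_singleton q)) (by grind)).mono (by grind) le_rfl

theorem IsAdmissible.hasLongPath [Finite V] (h : IsAdmissible G (m + 1) S a b z)
    (hG : HasMatchingCuts G) (IH : ∀ S, ForcesLongPath G m S)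
    (hsize : ∀ T : Set V, T.ncard < S.ncard → ForcesLongPath G (m + 1) T) :
    HasLongPath G S a b (2 ^ (m + 2)) := by
  obtain hcut | hpath := h.noTwoCut_or_hasLongPath hsize
  swap
  · exact hpath
  obtain ⟨C, D, rfl, hCD, hDC⟩ := h.exists_isSplit hG hcut
  by_cases hz : z ∈ D
  · rw [Set.union_comm] at h hcut hsize ⊢
    have hzC := hCD.disjoint.notMem_of_mem_right hz
    exact (IsReducedSplit.hasLongPath ⟨hDC, hCD, h.symm, hcut.symm, hzC⟩ hG.cliqueFree_three IH
      hsize).symm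
  · exact IsReducedSplit.hasLongPath ⟨hCD, hDC, h, hcut, hz⟩ hG.cliqueFree_three IH hsize

theorem HasMatchingCuts.forcesLongPath [Finite V] (hG : HasMatchingCuts G) (m : ℕ) (S : Set V) :
    ForcesLongPath G m S := by
  induction m generalizing S with
  | zero => exact forcesLongPath_zero G S
  | succ m IH =>
    induction hn : S.ncard using Nat.strong_induction_on generalizing S with
    | _ n hsize =>
      subst hn
      exact fun a b z h => h.hasLongPath hG IH fun T hT => hsize _ hT T rfl

end MainInduction

section TwoConnectedGraphs

variable {V : Type*} {G : SimpleGraph V} {a b e t x y : V} {m : ℕ}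

theorem TwoConnected.hasLongPath_compl_singleton (h : TwoConnected G) (hx : x ≠ t) (hy : y ≠ t) :
    HasLongPath G {t}ᶜ x y 0 := by
  obtain ⟨p⟩ := (h.2 t).preconnected ⟨x, by simpa using hx⟩ ⟨y, by simpa using hy⟩
  refine .of_walk (p.map (SimpleGraph.Subgraph.hom _)) fun v hv => ?_
  obtain ⟨w, -, rfl⟩ := List.mem_map.1 (p.support_map _ ▸ hv)
  exact w.2.2

theorem TwoConnected.twoConnectedBetween_univ (h : TwoConnected G) (hab : a ≠ b) :
    TwoConnectedBetween G Set.univ a b := by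
  rintro U - ⟨u, hu⟩ ha hb t hat
  obtain ⟨s, hsU, hat⟩ : ∃ s ∉ U, AttachedAt G Set.univ U {s} := by
    by_cases ht : t ∈ U
    · exact ⟨a, ha, by grind [AttachedAt]⟩
    · exact ⟨t, ht, hat⟩
  obtain ⟨w, hwU, hws⟩ : ∃ w ∉ U, w ≠ s := by
    by_cases has : a = s
    · exact ⟨b, hb, has ▸ hab.symm⟩
    · exact ⟨a, ha, has⟩
  have hclosed : AttachedAt G {s}ᶜ U ∅ := fun x hx y hy hxy =>
    .inl ((hat x hx y trivial hxy).resolve_right hy)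
  exact hwU (hclosed.mem_of_hasLongPath hu
    (h.hasLongPath_compl_singleton (ne_of_mem_of_not_mem hu hsU) hws))

theorem TwoConnected.exists_ne_of_cliqueFree_three (h : TwoConnected G) (hG : G.CliqueFree 3)
    (a b e : V) : ∃ v, v ≠ a ∧ v ≠ b ∧ v ≠ e := by
  by_contra! hno
  have hV : ∀ v, v = a ∨ v = b ∨ v = e := fun v => by
    have := hno v
    grind
  have hadj : ∀ x y t, x ≠ y → x ≠ t → y ≠ t → G.Adj x y := by
    intro x y t hxy hxt hyt
    obtain ⟨v, hv, w, hw, hwv, hvw⟩ :=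
      (h.hasLongPath_compl_singleton hxt hyt).exists_adj_notMem (U := {x}) rfl hxy.symm
    obtain rfl : v = x := hv
    obtain rfl : w = y := by grind [hV v, hV w, hV y, hV t]
    exact hvw
  obtain ⟨x, y, z, hxy, hxz, hyz⟩ := h.1
  exact not_adj_of_cliqueFree_three hG (hadj x y z hxy hxz hyz) (hadj y z x hyz hxy.symm hxz.symm)
    (hadj x z y hxz hxy hyz.symm)

theorem hypercube_twoConnected_path_weak_general [Finite V] (h : TwoConnected G)
    (hG : HasMatchingCuts G) (hab : a ≠ b) (e : V)
    (hdeg : ∀ v, v ≠ a → v ≠ b → v ≠ e → m + 2 ≤ (G.neighborSet v).ncard) :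
    ∃ p : G.Walk a b, p.IsPath ∧ 2 ^ (m + 1) ≤ p.length := by
  obtain ⟨v, hv⟩ := h.exists_ne_of_cliqueFree_three hG.cliqueFree_three a b e
  obtain ⟨p, hp, -, hlen⟩ := hG.forcesLongPath m Set.univ a b e
    { ne := hab
      left_mem := trivial
      right_mem := trivial
      twoConnectedBetween := h.twoConnectedBetween_univ hab
      le_degIn := by simpa [degIn] using hdeg
      exists_ne := ⟨v, trivial, hv⟩ }
  exact ⟨p, hp, hlen⟩

end TwoConnectedGraphs

section Hypercube

variable {V W : Type*} {G : SimpleGraph V} {H : SimpleGraph W} {n : ℕ} {x y : Fin n → Bool}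

theorem HasMatchingCuts.of_hom_injective (hH : HasMatchingCuts H) (f : G →g H)
    (hf : Function.Injective f) : HasMatchingCuts G := by
  intro a b hab
  obtain ⟨X, ha, hb, hX, hX'⟩ := hH (f a) (f b) (hf.ne hab)
  exact ⟨f ⁻¹' X, ha, hb,
    fun x hx y hy y' hy' hxy hxy' => hf (hX _ hx _ hy _ hy' (f.map_adj hxy) (f.map_adj hxy')),
    fun y hy x hx x' hx' hxy hxy' => hf (hX' _ hy _ hx _ hx' (f.map_adj hxy) (f.map_adj hxy'))⟩

theorem hypercube_adj_iff_hammingDist : (hypercube n).Adj x y ↔ hammingDist x y = 1 := by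
  rw [hypercube, SimpleGraph.fromRel_adj, hammingDist_comm y x, or_self, and_iff_right_iff_imp]
  rintro h rfl
  simp at h

theorem eq_update_not_of_hypercube_adj (h : (hypercube n).Adj x y) {i : Fin n} (hi : x i ≠ y i) :
    y = Function.update x i (!x i) := by
  rw [hypercube_adj_iff_hammingDist, hammingDist, Finset.card_eq_one] at h
  obtain ⟨k, hk⟩ := h
  have hxy : ∀ j, x j ≠ y j ↔ j = k := by simpa [Finset.ext_iff] using hk
  obtain rfl := (hxy i).1 hi
  refine Function.eq_update_iff.2 ⟨Bool.eq_not.2 hi.symm, fun j hj => ?_⟩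
  exact (not_not.1 fun hne => hj ((hxy j).1 hne)).symm

theorem hasMatchingCuts_hypercube (n : ℕ) : HasMatchingCuts (hypercube n) := by
  intro a b hab
  obtain ⟨i, hi⟩ := Function.ne_iff.1 hab
  have hunique : ∀ x y y' : Fin n → Bool, x i ≠ y i → x i ≠ y' i →
      (hypercube n).Adj x y → (hypercube n).Adj x y' → y = y' := fun x y y' hy hy' hxy hxy' =>
    (eq_update_not_of_hypercube_adj hxy hy).trans (eq_update_not_of_hypercube_adj hxy' hy').symm
  refine ⟨{x | x i = a i}, rfl, hi.symm, fun x hx y hy y' hy' => ?_, fun y hy x hx x' hx' => ?_⟩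
  · exact hunique x y y' (fun h => hy (h.symm.trans hx)) fun h => hy' (h.symm.trans hx)
  · exact fun hxy hxy' => hunique y x x' (fun h => hy (h.trans hx)) (fun h => hy (h.trans hx'))
      hxy.symm hxy'.symm

theorem ncard_neighborSet_coe (K : H.Subgraph) (v : K.verts) :
    (K.coe.neighborSet v).ncard = (K.neighborSet v).ncard :=
  Set.ncard_congr' (K.coeNeighborSetEquiv v)

end Hypercube

/-- Let `G` be a 2-connected subgraph of `Q_n` with distinct vertices `a, b` such that
every vertex `z ∉ {a,b}` has degree at least `d ≥ 2` in `G`. Then `G` contains an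
`a-b` path of length at least `2^(d-1)`. -/
theorem hypercube_twoConnected_path_weak (n d : ℕ) (hd : 2 ≤ d)
    (G : (hypercube n).Subgraph) (h2 : TwoConnected G.coe)
    (a b : Fin n → Bool) (ha : a ∈ G.verts) (hb : b ∈ G.verts) (hab : a ≠ b)
    (hdeg : ∀ z ∈ G.verts, z ≠ a → z ≠ b → d ≤ (G.neighborSet z).ncard) :
    ∃ p : G.coe.Walk ⟨a, ha⟩ ⟨b, hb⟩, p.IsPath ∧ 2 ^ (d - 1) ≤ p.length := by
  obtain ⟨m, rfl⟩ := Nat.exists_eq_add_of_le' hd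
  refine hypercube_twoConnected_path_weak_general h2
    ((hasMatchingCuts_hypercube n).of_hom_injective G.hom Subtype.val_injective)
    (by simpa using hab) ⟨a, ha⟩ fun v hva hvb _ => ?_
  rw [ncard_neighborSet_coe]
  exact hdeg v v.2 (fun h => hva (Subtype.ext h)) fun h => hvb (Subtype.ext h)
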